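/- Controlled divergence-free extension to ℝ³. For every M > 0 there exist constants c(k,M) (k = 0,1,2,…) such that: if R₀ > 0, (u,p) is a smooth solution of the steady Navier–Stokes equations on ℝ³ \ closedBall(0,R₀) with |u(x)| ≤ C*/(R₀+|x|) there for some C* ≤ M, and the no-outflow condition ∫_{∂B_{R₁}} u·n dS = 0 holds for some R₁ > R₀, then there exist smooth functions ũ : ℝ³ → ℝ³ and p̃ : ℝ³ → ℝ such that: (i) ũ = u and p̃ = p − p₀ on ℝ³ \ B_{3R₀} for a suitable constant p₀; (ii) div ũ = 0 on all of ℝ³; (iii) |∇^k ũ(x)| ≤ c(k,M) C*/(R₀+|x|)^{k+1} and |∇^k p̃(x)| ≤ c(k,M) C*/(R₀+|x|)^{k+2} on ℝ³ for all k ≥ 0; and (iv) the field f := −Δũ + (ũ·∇)ũ + ∇p̃ is supported in closedBall(0,3R₀) and satisfies |∇^k f(x)| ≤ c(k,M) C*/(R₀+|x|)^{k+3} on ℝ³ for all k ≥ 0. -/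

import Mathlib

open MeasureTheory Real Metric Filter

noncomputable section

abbrev E3 : Type := EuclideanSpace ℝ (Fin 3)

def ee (j : Fin 3) : E3 := EuclideanSpace.single j 1

def pd (f : E3 → ℝ) (j : Fin 3) (x : E3) : ℝ := fderiv ℝ f x (ee j)

def pd2 (f : E3 → ℝ) (j : Fin 3) (x : E3) : ℝ :=
  fderiv ℝ (fun y => fderiv ℝ f y (ee j)) x (ee j)

/-- steady Navier–Stokes system on `s` -/
def IsNS (s : Set E3) (u : E3 → E3) (p : E3 → ℝ) : Prop :=
  (∀ x ∈ s, ∀ i, -(∑ j, pd2 (fun y => u y i) j x)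
      + (∑ j, u x j * pd (fun y => u y i) j x) + pd p i x = 0)
  ∧ ∀ x ∈ s, (∑ j, pd (fun y => u y j) j x) = 0

/-- surface integral over the sphere of radius `R` centered at the origin -/
def sphInt (R : ℝ) (F : E3 → ℝ) : ℝ :=
  R ^ 2 * ∫ ω : sphere (0 : E3) 1, F (R • (ω : E3)) ∂((volume : Measure E3).toSphere)

section

open scoped ContDiff

section PartialDerivatives

theorem contDiff_pd {f : E3 → ℝ} (hf : ContDiff ℝ ∞ f) (j : Fin 3) : ContDiff ℝ ∞ (pd f j) :=
  (hf.fderiv_right (m := ∞) (by simp)).clm_apply contDiff_const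

theorem contDiff_differentiable {f : E3 → ℝ} (hf : ContDiff ℝ ∞ f) : Differentiable ℝ f :=
  hf.differentiable (by simp)

theorem pd_congr {f g : E3 → ℝ} {x : E3} (h : f =ᶠ[nhds x] g) (j : Fin 3) :
    pd f j x = pd g j x := by
  rw [pd, pd, h.fderiv_eq]

theorem pd_congr_on {f g : E3 → ℝ} {s : Set E3} (hs : IsOpen s) (h : ∀ x ∈ s, f x = g x)
    (j : Fin 3) : ∀ x ∈ s, pd f j x = pd g j x := fun _ hx =>
  pd_congr (Filter.eventuallyEq_of_mem (hs.mem_nhds hx) h) j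

theorem pd_add {f g : E3 → ℝ} (hf : ContDiff ℝ ∞ f) (hg : ContDiff ℝ ∞ g) (j : Fin 3) (x : E3) :
    pd (fun y => f y + g y) j x = pd f j x + pd g j x := by
  simp only [pd]
  rw [fderiv_fun_add (contDiff_differentiable hf x) (contDiff_differentiable hg x)]
  rfl

theorem pd_sub {f g : E3 → ℝ} (hf : ContDiff ℝ ∞ f) (hg : ContDiff ℝ ∞ g) (j : Fin 3) (x : E3) :
    pd (fun y => f y - g y) j x = pd f j x - pd g j x := by
  simp only [pd]
  rw [fderiv_fun_sub (contDiff_differentiable hf x) (contDiff_differentiable hg x)]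
  rfl

theorem pd_neg {f : E3 → ℝ} (j : Fin 3) (x : E3) :
    pd (fun y => -f y) j x = -pd f j x := by
  simp only [pd]
  rw [fderiv_fun_neg]
  rfl

theorem pd_sum {f : Fin 3 → E3 → ℝ} (hf : ∀ i, ContDiff ℝ ∞ (f i)) (j : Fin 3) (x : E3) :
    pd (fun y => ∑ i, f i y) j x = ∑ i, pd (f i) j x := by
  simp only [pd]
  rw [fderiv_fun_sum fun i _ => contDiff_differentiable (hf i) x]
  simp

theorem pd_mul {f g : E3 → ℝ} (hf : ContDiff ℝ ∞ f) (hg : ContDiff ℝ ∞ g) (j : Fin 3) (x : E3) :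
    pd (fun y => f y * g y) j x = f x * pd g j x + pd f j x * g x := by
  simp only [pd]
  rw [fderiv_fun_mul (contDiff_differentiable hf x) (contDiff_differentiable hg x)]
  simp [mul_comm]

theorem pd_const (c : ℝ) (j : Fin 3) (x : E3) : pd (fun _ => c) j x = 0 := by
  simp [pd]

theorem pd_const_mul {f : E3 → ℝ} (hf : ContDiff ℝ ∞ f) (c : ℝ) (j : Fin 3) (x : E3) :
    pd (fun y => c * f y) j x = c * pd f j x := by
  rw [pd_mul contDiff_const hf, pd_const]; ring

theorem pd_comm {f : E3 → ℝ} (hf : ContDiff ℝ ∞ f) (i j : Fin 3) (x : E3) :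
    pd (pd f i) j x = pd (pd f j) i x := by
  have h1 : DifferentiableAt ℝ (fderiv ℝ f) x :=
    (hf.fderiv_right (m := ∞) (by simp)).differentiable (by simp) x
  have key : ∀ a b : Fin 3, pd (pd f a) b x = fderiv ℝ (fderiv ℝ f) x (ee b) (ee a) := by
    intro a b
    change fderiv ℝ (fun y => fderiv ℝ f y (ee a)) x (ee b) = _
    rw [fderiv_clm_apply h1 (differentiableAt_const _)]
    simp
  rw [key, key]
  exact (hf.contDiffAt.isSymmSndFDerivAt (by
    simpa using WithTop.coe_le_coe.2 (le_top : (2 : ℕ∞) ≤ ⊤))).eq _ _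

theorem eq_sum_ee (v : E3) : v = ∑ j, v j • ee j := by
  ext i
  fin_cases i <;> simp [ee, Fin.sum_univ_three]

theorem fderiv_apply_eq_sum (f : E3 → ℝ) (x v : E3) :
    fderiv ℝ f x v = ∑ j, v j * pd f j x := by
  conv_lhs => rw [eq_sum_ee v]
  simp [pd]

theorem fderiv_eq_sum (f : E3 → ℝ) :
    fderiv ℝ f = fun x => ∑ j, pd f j x • (EuclideanSpace.proj j : E3 →L[ℝ] ℝ) := by
  ext x v
  rw [fderiv_apply_eq_sum]
  simp [mul_comm]

theorem norm_proj_le (j : Fin 3) : ‖(EuclideanSpace.proj j : E3 →L[ℝ] ℝ)‖ ≤ 1 :=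
  ContinuousLinearMap.opNorm_le_bound _ zero_le_one fun x => by
    simpa using PiLp.norm_apply_le x j

theorem norm_ee (j : Fin 3) : ‖ee j‖ = 1 := by simp [ee]

theorem norm_iteratedFDeriv_succ_le {f : E3 → ℝ} (hf : ContDiff ℝ ∞ f) (n : ℕ) (x : E3) :
    ‖iteratedFDeriv ℝ (n + 1) f x‖ ≤ ∑ j, ‖iteratedFDeriv ℝ n (pd f j) x‖ := by
  rw [← norm_iteratedFDeriv_fderiv, fderiv_eq_sum]
  have hs : ∀ j : Fin 3, ContDiff ℝ ∞
      (fun x => pd f j x • (EuclideanSpace.proj j : E3 →L[ℝ] ℝ)) := fun j =>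
    (contDiff_pd hf j).smul contDiff_const
  rw [iteratedFDeriv_fun_sum_apply fun j _ => ((hs j).of_le (mod_cast le_top)).contDiffAt]
  refine (norm_sum_le _ _).trans (Finset.sum_le_sum fun j _ => ?_)
  rw [iteratedFDeriv_smul_const_apply
    (((contDiff_pd hf j).of_le (mod_cast le_top)).contDiffAt)]
  refine (ContinuousLinearMap.norm_compContinuousMultilinearMap_le _ _).trans ?_
  refine mul_le_of_le_one_left (norm_nonneg _) ?_
  refine ContinuousLinearMap.opNorm_le_bound _ zero_le_one fun t => ?_
  simp only [ContinuousLinearMap.smulRight_apply, norm_smul, ContinuousLinearMap.id_apply]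
  rw [one_mul]
  exact mul_le_of_le_one_right (norm_nonneg _) (norm_proj_le j)

theorem norm_iteratedFDeriv_pd_le {f : E3 → ℝ} (hf : ContDiff ℝ ∞ f) (j : Fin 3) (n : ℕ)
    (x : E3) : ‖iteratedFDeriv ℝ n (pd f j) x‖ ≤ ‖iteratedFDeriv ℝ (n + 1) f x‖ := by
  rw [← norm_iteratedFDeriv_fderiv]
  have h1 : ContDiff ℝ ∞ (fderiv ℝ f) := hf.fderiv_right (by simp)
  refine ((ContinuousLinearMap.apply ℝ ℝ (ee j)).norm_iteratedFDeriv_comp_left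
    h1.contDiffAt (n := n) (mod_cast le_top)).trans ?_
  refine mul_le_of_le_one_left (norm_nonneg _) ?_
  refine ContinuousLinearMap.opNorm_le_bound _ zero_le_one fun t => ?_
  simpa [norm_ee] using t.le_opNorm (ee j)

/-- Iterated partial derivatives; the head of the list is differentiated first. -/
def pds : List (Fin 3) → (E3 → ℝ) → E3 → ℝ
  | [], f => f
  | j :: α, f => pds α (pd f j)

theorem contDiff_pds {f : E3 → ℝ} (hf : ContDiff ℝ ∞ f) (α : List (Fin 3)) :
    ContDiff ℝ ∞ (pds α f) := by
  induction α generalizing f with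
  | nil => exact hf
  | cons j α ih => exact ih (contDiff_pd hf j)

theorem pds_append_singleton (f : E3 → ℝ) (α : List (Fin 3)) (l : Fin 3) :
    pds (α ++ [l]) f = pd (pds α f) l := by
  induction α generalizing f with
  | nil => rfl
  | cons j α ih => exact ih _

theorem abs_pds_le {f : E3 → ℝ} (hf : ContDiff ℝ ∞ f) (α : List (Fin 3)) (x : E3) :
    |pds α f x| ≤ ‖iteratedFDeriv ℝ α.length f x‖ := by
  induction α generalizing f with
  | nil => simp [pds]
  | cons j α ih => exact (ih (contDiff_pd hf j)).trans (norm_iteratedFDeriv_pd_le hf j _ x)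

theorem norm_iteratedFDeriv_le_of_pds {f : E3 → ℝ} (hf : ContDiff ℝ ∞ f) (n : ℕ) (x : E3)
    {B : ℝ} (h : ∀ α : List (Fin 3), α.length = n → |pds α f x| ≤ B) :
    ‖iteratedFDeriv ℝ n f x‖ ≤ 3 ^ n * B := by
  induction n generalizing f with
  | zero => simpa [pds] using h [] rfl
  | succ n ih =>
    refine (norm_iteratedFDeriv_succ_le hf n x).trans ?_
    refine (Finset.sum_le_sum fun j _ => ih (contDiff_pd hf j) fun α hα =>
      h (j :: α) (by simp [hα])).trans (le_of_eq ?_)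
    simp; ring

theorem continuous_norm_iteratedFDeriv {f : E3 → ℝ} (hf : ContDiff ℝ ∞ f) (n : ℕ) :
    Continuous fun x => ‖iteratedFDeriv ℝ n f x‖ :=
  (hf.continuous_iteratedFDeriv (m := n) (mod_cast le_top)).norm

theorem iteratedFDeriv_congr_on {F : Type*} [NormedAddCommGroup F] [NormedSpace ℝ F]
    {f g : E3 → F} {s : Set E3} (hs : IsOpen s) (h : ∀ x ∈ s, f x = g x)
    (n : ℕ) : ∀ x ∈ s, iteratedFDeriv ℝ n f x = iteratedFDeriv ℝ n g x := fun _ hx =>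
  (Filter.EventuallyEq.iteratedFDeriv ℝ
    (Filter.eventuallyEq_of_mem (hs.mem_nhds hx) h) n).eq_of_nhds

theorem contDiff_normSq : ContDiff ℝ ∞ fun y : E3 => ‖y‖ ^ 2 := contDiff_norm_sq ℝ

theorem pd_comp_normSq {h : ℝ → ℝ} {h1 : ℝ} {x : E3} (hh : HasDerivAt h h1 (‖x‖ ^ 2))
    (j : Fin 3) : pd (fun y => h (‖y‖ ^ 2)) j x = 2 * x j * h1 := by
  have h2 : HasFDerivAt (fun y : E3 => ‖y‖ ^ 2) (2 • innerSL ℝ x) x :=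
    (hasStrictFDerivAt_norm_sq x).hasFDerivAt
  have h3 := hh.comp_hasFDerivAt x h2
  change fderiv ℝ (h ∘ fun y => ‖y‖ ^ 2) x (ee j) = _
  rw [h3.fderiv]
  simp [ee, EuclideanSpace.inner_single_right]
  ring

theorem contDiff_coord (j : Fin 3) : ContDiff ℝ ∞ fun y : E3 => y j :=
  (EuclideanSpace.proj j : E3 →L[ℝ] ℝ).contDiff

theorem pd_coord (i j : Fin 3) (x : E3) : pd (fun y => y i) j x = if i = j then 1 else 0 := by
  change fderiv ℝ (EuclideanSpace.proj i : E3 →L[ℝ] ℝ) x (ee j) = _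
  rw [ContinuousLinearMap.fderiv]
  simp [ee]

end PartialDerivatives

section ParametricIntegrals

theorem hasFDerivAt_setIntegral_of_continuous {H α G : Type*} [NormedAddCommGroup H]
    [NormedSpace ℝ H] [ProperSpace H] [TopologicalSpace α] [MeasurableSpace α]
    [OpensMeasurableSpace α] [T2Space α] [SecondCountableTopology α]
    [NormedAddCommGroup G] [NormedSpace ℝ G]
    {μ : Measure α} [IsFiniteMeasureOnCompacts μ] {K : Set α} (hK : IsCompact K)
    {F : H → α → G} {F' : H → α → H →L[ℝ] G} (hF : Continuous fun z : H × α => F z.1 z.2)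
    (hF' : Continuous fun z : H × α => F' z.1 z.2)
    (hd : ∀ x a, HasFDerivAt (fun x => F x a) (F' x a) x) (x : H) :
    HasFDerivAt (fun x => ∫ a in K, F x a ∂μ) (∫ a in K, F' x a ∂μ) x := by
  obtain ⟨C, hC⟩ := ((isCompact_closedBall x 1).prod hK).exists_bound_of_continuousOn
    hF'.continuousOn
  have c1 : ∀ x, Continuous (F x) := fun x =>
    hF.comp (continuous_const.prodMk continuous_id)
  have c2 : ∀ x, Continuous (F' x) := fun x =>
    hF'.comp (continuous_const.prodMk continuous_id)
  have : IsFiniteMeasure (μ.restrict K) := ⟨by simpa using hK.measure_lt_top⟩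
  refine hasFDerivAt_integral_of_dominated_of_fderiv_le (F' := F') (bound := fun _ => C)
    (closedBall_mem_nhds x one_pos)
    (Eventually.of_forall fun y => ((c1 y).continuousOn.aestronglyMeasurable_of_isCompact hK
      hK.measurableSet))
    ((c1 x).continuousOn.integrableOn_compact hK)
    ((c2 x).continuousOn.aestronglyMeasurable_of_isCompact hK hK.measurableSet) ?_
    (integrable_const C) (Eventually.of_forall fun a y _ => hd y a)
  refine (ae_restrict_iff' hK.measurableSet).2 (Eventually.of_forall fun a ha y hy => ?_)
  exact hC (y, a) ⟨hy, ha⟩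

theorem hasDerivAt_setIntegral_of_continuous {α : Type*} [TopologicalSpace α] [MeasurableSpace α]
    [OpensMeasurableSpace α] [T2Space α] [SecondCountableTopology α]
    {μ : Measure α} [IsFiniteMeasureOnCompacts μ] {K : Set α} (hK : IsCompact K)
    {F F' : ℝ → α → ℝ} (hF : Continuous fun z : ℝ × α => F z.1 z.2)
    (hF' : Continuous fun z : ℝ × α => F' z.1 z.2)
    (hd : ∀ s a, HasDerivAt (fun s => F s a) (F' s a) s) (s : ℝ) :
    HasDerivAt (fun s => ∫ a in K, F s a ∂μ) (∫ a in K, F' s a ∂μ) s := by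
  have h := hasFDerivAt_setIntegral_of_continuous (μ := μ) hK (F := F)
    (F' := fun s a => ContinuousLinearMap.toSpanSingleton ℝ (F' s a)) hF
    ((ContinuousLinearMap.toSpanSingletonCLE (𝕜 := ℝ) (E := ℝ)).continuous.comp hF')
    (fun s a => (hd s a).hasFDerivAt) s
  have h2 := h.hasDerivAt
  rw [ContinuousLinearMap.integral_apply] at h2
  · simpa using h2
  · exact (((ContinuousLinearMap.toSpanSingletonCLE (𝕜 := ℝ) (E := ℝ)).continuous.comp
      (hF'.comp (continuous_const.prodMk continuous_id))).continuousOn.integrableOn_compact hK)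

end ParametricIntegrals

section Pairing

theorem pd_comp_affine {f : E3 → ℝ} (hf : ContDiff ℝ ∞ f) (x : E3) (s : ℝ) (j : Fin 3) (y : E3) :
    pd (fun y => f (x + s • y)) j y = s * pd f j (x + s • y) := by
  have h1 : HasFDerivAt (fun y : E3 => x + s • y) (s • ContinuousLinearMap.id ℝ E3) y :=
    ((hasFDerivAt_id y).const_smul s).const_add x
  have h2 := ((contDiff_differentiable hf (x + s • y)).hasFDerivAt).comp y h1
  change fderiv ℝ (f ∘ fun y => x + s • y) y (ee j) = _
  rw [h2.fderiv]
  simp [pd]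

theorem contDiff_comp_affine {f : E3 → ℝ} (hf : ContDiff ℝ ∞ f) (x : E3) (s : ℝ) :
    ContDiff ℝ ∞ fun y => f (x + s • y) :=
  hf.comp (contDiff_const.add (contDiff_id.const_smul s))

theorem hasCompactSupport_of_vanish {g : E3 → ℝ} {R : ℝ} (h : ∀ y, R < ‖y‖ → g y = 0) :
    HasCompactSupport g :=
  HasCompactSupport.of_support_subset_isCompact (isCompact_closedBall (0 : E3) R) fun y hy => by
    by_contra hn
    exact hy (h y (by simpa using hn))

theorem pd_vanish {g : E3 → ℝ} {R : ℝ} (h : ∀ y, R < ‖y‖ → g y = 0) (j : Fin 3) :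
    ∀ y, R < ‖y‖ → pd g j y = 0 := fun y hy => by
  rw [pd_congr_on (isOpen_lt continuous_const continuous_norm) h j y hy, pd_const]

theorem hasCompactSupport_pd {g : E3 → ℝ} (hg : HasCompactSupport g) (j : Fin 3) :
    HasCompactSupport (pd g j) :=
  (hg.fderiv (𝕜 := ℝ)).comp_left (g := fun L : E3 →L[ℝ] ℝ => L (ee j)) (by simp)

theorem integral_mul_pd {f g : E3 → ℝ} (hf : ContDiff ℝ ∞ f) (hg : ContDiff ℝ ∞ g)
    (hc : HasCompactSupport g) (j : Fin 3) :
    ∫ y, f y * pd g j y = -∫ y, pd f j y * g y := by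
  refine integral_mul_fderiv_eq_neg_fderiv_mul_of_integrable ?_ ?_ ?_
    (fun x _ => contDiff_differentiable hf x) (fun x _ => contDiff_differentiable hg x)
  · exact ((contDiff_pd hf j).continuous.mul hg.continuous).integrable_of_hasCompactSupport
      hc.mul_left
  · exact (hf.continuous.mul (contDiff_pd hg j).continuous).integrable_of_hasCompactSupport
      (hasCompactSupport_pd hc j).mul_left
  · exact (hf.continuous.mul hg.continuous).integrable_of_hasCompactSupport hc.mul_left

theorem integral_pd_eq_zero {g : E3 → ℝ} (hg : ContDiff ℝ ∞ g)
    (hc : HasCompactSupport g) (j : Fin 3) : ∫ y, pd g j y = 0 := by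
  have h := integral_mul_pd (f := fun _ => 1) contDiff_const hg hc j
  simpa [pd_const] using h

theorem integral_comp_affine_mul_pd {f g : E3 → ℝ} (hf : ContDiff ℝ ∞ f) (hg : ContDiff ℝ ∞ g)
    (hc : HasCompactSupport g) (x : E3) (s : ℝ) (j : Fin 3) :
    ∫ y, f (x + s • y) * pd g j y = -(s * ∫ y, pd f j (x + s • y) * g y) := by
  rw [integral_mul_pd (contDiff_comp_affine hf x s) hg hc, ← integral_const_mul]
  simp only [pd_comp_affine hf, mul_assoc]

theorem integrable_comp_affine_mul {f g : E3 → ℝ} (hf : Continuous f) (hg : Continuous g)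
    (hc : HasCompactSupport g) (x : E3) (s : ℝ) :
    Integrable fun y => f (x + s • y) * g y :=
  ((hf.comp (by fun_prop)).mul hg).integrable_of_hasCompactSupport hc.mul_left

end Pairing

section Kernel

theorem hasDerivAt_expNegInvGlue (x : ℝ) :
    HasDerivAt expNegInvGlue ((x⁻¹) ^ 2 * expNegInvGlue x) x := by
  simpa using expNegInvGlue.hasDerivAt_polynomial_eval_inv_mul 1 x

theorem hasDerivAt_deriv_expNegInvGlue (x : ℝ) :
    HasDerivAt (fun x => (x⁻¹) ^ 2 * expNegInvGlue x)
      ((x⁻¹) ^ 2 * ((x⁻¹) ^ 2 - 2 * x⁻¹) * expNegInvGlue x) x := by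
  have h := expNegInvGlue.hasDerivAt_polynomial_eval_inv_mul (Polynomial.X ^ 2) x
  simpa [one_add_one_eq_two] using h

/-- A smooth function on the line, vanishing beyond `3 / 4` and convex on `[0, 1]`. -/
def convexGlue (t : ℝ) : ℝ := expNegInvGlue ((3 / 4 - t) / 2)

theorem contDiff_convexGlue : ContDiff ℝ ∞ convexGlue :=
  expNegInvGlue.contDiff.comp (by fun_prop)

theorem deriv_deriv_convexGlue (t : ℝ) : deriv (deriv convexGlue) t =
    (((3 / 4 - t) / 2)⁻¹ ^ 2 * (((3 / 4 - t) / 2)⁻¹ ^ 2 - 2 * ((3 / 4 - t) / 2)⁻¹) *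
      expNegInvGlue ((3 / 4 - t) / 2)) / 4 := by
  have hin : ∀ t : ℝ, HasDerivAt (fun t : ℝ => (3 / 4 - t) / 2) (-1 / 2) t := fun t =>
    ((hasDerivAt_id t).const_sub (3 / 4)).div_const 2
  have h1 : deriv convexGlue = fun t => (fun x => (x⁻¹) ^ 2 * expNegInvGlue x) ((3 / 4 - t) / 2)
      * (-1 / 2) := by
    ext t
    exact ((hasDerivAt_expNegInvGlue _).comp t (hin t)).deriv
  rw [h1]
  have h2 := ((hasDerivAt_deriv_expNegInvGlue _).comp t (hin t)).mul_const (-1 / 2)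
  refine h2.deriv.trans ?_
  ring

theorem deriv_deriv_convexGlue_nonneg {t : ℝ} (ht : 0 ≤ t) :
    0 ≤ deriv (deriv convexGlue) t := by
  rw [deriv_deriv_convexGlue]
  rcases le_or_gt (3 / 4) t with h | h
  · rw [expNegInvGlue.zero_of_nonpos (by linarith)]; simp
  · have hx : 0 < (3 / 4 - t) / 2 := by linarith
    have h2 : 2 ≤ ((3 / 4 - t) / 2)⁻¹ := by
      rw [le_inv_comm₀ two_pos hx]; linarith
    have := expNegInvGlue.nonneg ((3 / 4 - t) / 2)
    have h3 : 0 ≤ ((3 / 4 - t) / 2)⁻¹ ^ 2 - 2 * ((3 / 4 - t) / 2)⁻¹ := by nlinarith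
    positivity

theorem deriv_deriv_convexGlue_zero_pos : 0 < deriv (deriv convexGlue) 0 := by
  rw [deriv_deriv_convexGlue]
  have := expNegInvGlue.pos_of_pos (x := (3 / 4 - 0) / 2) (by norm_num)
  have h3 : (0 : ℝ) < ((3 / 4 - 0) / 2)⁻¹ ^ 2 * (((3 / 4 - 0) / 2)⁻¹ ^ 2 -
    2 * ((3 / 4 - 0) / 2)⁻¹) := by norm_num
  positivity

theorem contDiff_deriv {f : ℝ → ℝ} (hf : ContDiff ℝ ∞ f) : ContDiff ℝ ∞ (deriv f) :=
  (contDiff_infty_iff_deriv.1 hf).2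

theorem hasDerivAt_of_contDiff {f : ℝ → ℝ} (hf : ContDiff ℝ ∞ f) (t : ℝ) :
    HasDerivAt f (deriv f t) t :=
  (hf.differentiable (by simp) t).hasDerivAt

theorem deriv_eq_zero_of_vanish {f : ℝ → ℝ} {a : ℝ} (h : ∀ t, a < t → f t = 0) :
    ∀ t, a < t → deriv f t = 0 := fun t ht => by
  have : f =ᶠ[nhds t] fun _ => 0 := Filter.eventuallyEq_of_mem (Ioi_mem_nhds ht) h
  rw [this.deriv_eq]; simp

/-- The Laplacian, as the sum of the pure second partial derivatives. -/
def lap (f : E3 → ℝ) (x : E3) : ℝ := ∑ l, pd (pd f l) l x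

theorem contDiff_lap {f : E3 → ℝ} (hf : ContDiff ℝ ∞ f) : ContDiff ℝ ∞ (lap f) :=
  ContDiff.sum fun l _ => contDiff_pd (contDiff_pd hf l) l

theorem exists_biharmonic_kernel : ∃ k φ : E3 → ℝ, ContDiff ℝ ∞ k ∧ ContDiff ℝ ∞ φ ∧
    (∀ y, 7 / 8 < ‖y‖ → k y = 0) ∧ (∀ y, 7 / 8 < ‖y‖ → φ y = 0) ∧
    (∀ j y, y j * φ y = pd (lap k) j y) ∧ 0 < ∫ y, φ y := by
  set h := convexGlue
  have c0 : ContDiff ℝ ∞ h := contDiff_convexGlue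
  have c1 := contDiff_deriv c0
  have c2 := contDiff_deriv c1
  have c3 := contDiff_deriv c2
  have z0 : ∀ t, 3 / 4 < t → h t = 0 := fun t ht =>
    expNegInvGlue.zero_of_nonpos (by linarith)
  have z2 := deriv_eq_zero_of_vanish (deriv_eq_zero_of_vanish z0)
  have z3 := deriv_eq_zero_of_vanish z2
  have sq : ∀ y : E3, 7 / 8 < ‖y‖ → 3 / 4 < ‖y‖ ^ 2 := fun y hy => by nlinarith
  have hsum : ∀ y : E3, ∑ l, y l * y l = ‖y‖ ^ 2 := fun y => by
    rw [EuclideanSpace.real_norm_sq_eq]; simp only [pow_two]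
  have cc : ∀ {g : ℝ → ℝ}, ContDiff ℝ ∞ g → ContDiff ℝ ∞ fun y : E3 => g (‖y‖ ^ 2) := fun hg =>
    hg.comp contDiff_normSq
  have p1 : ∀ j, pd (fun y : E3 => h (‖y‖ ^ 2)) j = fun y => 2 * (y j * deriv h (‖y‖ ^ 2)) := by
    intro j; ext y
    rw [pd_comp_normSq (hasDerivAt_of_contDiff c0 _)]; ring
  have p2 : ∀ j y, pd (pd (fun y : E3 => h (‖y‖ ^ 2)) j) j y =
      4 * (y j * y j) * deriv (deriv h) (‖y‖ ^ 2) + 2 * deriv h (‖y‖ ^ 2) := by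
    intro j y
    rw [p1, pd_const_mul ((contDiff_coord j).mul (cc c1)), pd_mul (contDiff_coord j) (cc c1),
      pd_comp_normSq (hasDerivAt_of_contDiff c1 _), pd_coord]
    simp; ring
  have p3 : lap (fun y : E3 => h (‖y‖ ^ 2)) = fun y =>
      (fun t => 4 * t * deriv (deriv h) t + 6 * deriv h t) (‖y‖ ^ 2) := by
    ext y
    simp only [lap, p2, Finset.sum_add_distrib, ← Finset.sum_mul, ← Finset.mul_sum, hsum]
    simp only [Finset.sum_const, Finset.card_univ, Fintype.card_fin, nsmul_eq_mul]
    push_cast; ring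
  have d2 : ∀ t, HasDerivAt (fun t => 4 * t * deriv (deriv h) t + 6 * deriv h t)
      (4 * t * deriv (deriv (deriv h)) t + 10 * deriv (deriv h) t) t := by
    intro t
    have e1 := (((hasDerivAt_id t).const_mul 4).mul (hasDerivAt_of_contDiff c2 t)).add
      ((hasDerivAt_of_contDiff c1 t).const_mul 6)
    exact e1.congr_deriv (by simp only [id]; ring)
  set H : E3 → ℝ := fun y => deriv (deriv h) (‖y‖ ^ 2)
  have cH : ContDiff ℝ ∞ H := cc c2
  have hH : HasCompactSupport H := hasCompactSupport_of_vanish fun y hy => z2 _ (sq y hy)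
  set φ : E3 → ℝ := fun y =>
    8 * ‖y‖ ^ 2 * deriv (deriv (deriv h)) (‖y‖ ^ 2) + 20 * deriv (deriv h) (‖y‖ ^ 2) with hφ
  have pH : ∀ j y, pd H j y = 2 * y j * deriv (deriv (deriv h)) (‖y‖ ^ 2) := fun j y =>
    pd_comp_normSq (hasDerivAt_of_contDiff c2 _) j
  refine ⟨fun y => h (‖y‖ ^ 2), φ, cc c0,
    ((contDiff_const.mul contDiff_normSq).mul (cc c3)).add (contDiff_const.mul (cc c2)),
    fun y hy => z0 _ (sq y hy), fun y hy => by simp [hφ, z2 _ (sq y hy), z3 _ (sq y hy)], ?_, ?_⟩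
  · intro j y
    rw [p3, pd_comp_normSq (d2 _)]
    simp only [hφ]; ring
  · have e1 : φ = fun y => 4 * ∑ j, y j * pd H j y + 20 * H y := by
      ext y
      simp only [hφ, pH]
      have : ∑ j, y j * (2 * y j * deriv (deriv (deriv h)) (‖y‖ ^ 2)) =
          2 * (∑ j, y j * y j) * deriv (deriv (deriv h)) (‖y‖ ^ 2) := by
        rw [Finset.mul_sum, Finset.sum_mul]
        exact Finset.sum_congr rfl fun j _ => by ring
      rw [this, hsum]; ring
    have i1 : ∀ j : Fin 3, Integrable fun y : E3 => y j * pd H j y := fun j =>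
      ((contDiff_coord j).continuous.mul
        (contDiff_pd cH j).continuous).integrable_of_hasCompactSupport
        (hasCompactSupport_pd hH j).mul_left
    have i2 : Integrable H := cH.continuous.integrable_of_hasCompactSupport hH
    have e2 : ∫ y, φ y = 8 * ∫ y, H y := by
      rw [e1, integral_add ((integrable_finsetSum _ fun j _ => i1 j).const_mul 4)
        (i2.const_mul 20), integral_const_mul, integral_finsetSum _ fun j _ => i1 j,
        integral_const_mul]
      have : ∀ j : Fin 3, ∫ y : E3, y j * pd H j y = -∫ y, H y := fun j => by
        rw [integral_mul_pd (contDiff_coord j) cH hH j]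
        simp [pd_coord]
      simp only [this]
      simp; ring
    rw [e2]
    have : 0 < ∫ y, H y := by
      refine cH.continuous.integral_pos_of_hasCompactSupport_nonneg_nonzero hH (x := 0)
        (fun y => deriv_deriv_convexGlue_nonneg (by positivity)) ?_
      have := deriv_deriv_convexGlue_zero_pos
      simpa [H] using this.ne'
    positivity

end Kernel

section PointwiseEstimate

/-- The velocity `v`, stress `T` and pressure `q` solve the stationary Stokes system on `s`. -/
def StokesOn (s : Set E3) (v : Fin 3 → E3 → ℝ) (T : Fin 3 → Fin 3 → E3 → ℝ) (q : E3 → ℝ) : Prop :=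
  (∀ x ∈ s, ∀ i, lap (v i) x = (∑ j, pd (T i j) j x) + pd q i x) ∧
    ∀ x ∈ s, ∑ j, pd (v j) j x = 0

theorem pd_lap {f : E3 → ℝ} (hf : ContDiff ℝ ∞ f) (j : Fin 3) : pd (lap f) j = lap (pd f j) := by
  ext x
  unfold lap
  rw [pd_sum fun l => contDiff_pd (contDiff_pd hf l) l]
  refine Finset.sum_congr rfl fun l _ => ?_
  rw [pd_comm (contDiff_pd hf l)]
  congr 1
  ext y
  exact pd_comm hf _ _ y

theorem lap_congr_on {f g : E3 → ℝ} {s : Set E3} (hs : IsOpen s) (h : ∀ x ∈ s, f x = g x) :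
    ∀ x ∈ s, lap f x = lap g x := fun x hx =>
  Finset.sum_congr rfl fun l _ => pd_congr_on hs (pd_congr_on hs h l) l x hx

theorem lap_sum {f : Fin 3 → E3 → ℝ} (hf : ∀ i, ContDiff ℝ ∞ (f i)) (x : E3) :
    lap (fun y => ∑ i, f i y) x = ∑ i, lap (f i) x := by
  unfold lap
  rw [Finset.sum_comm]
  refine Finset.sum_congr rfl fun l _ => ?_
  rw [show pd (fun y => ∑ i, f i y) l = fun y => ∑ i, pd (f i) l y from
    funext fun y => pd_sum hf l y, pd_sum fun i => contDiff_pd (hf i) l]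

variable {s : Set E3} {v : Fin 3 → E3 → ℝ} {T : Fin 3 → Fin 3 → E3 → ℝ} {q : E3 → ℝ}

theorem StokesOn.partial_deriv (hs : IsOpen s) (hv : ∀ i, ContDiff ℝ ∞ (v i))
    (hT : ∀ i j, ContDiff ℝ ∞ (T i j)) (hq : ContDiff ℝ ∞ q) (h : StokesOn s v T q) (l : Fin 3) :
    StokesOn s (fun i => pd (v i) l) (fun i j => pd (T i j) l) (pd q l) := by
  refine ⟨fun x hx i => ?_, fun x hx => ?_⟩
  · rw [← pd_lap (hv i), pd_congr_on hs (fun y hy => h.1 y hy i) l x hx,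
      pd_add (ContDiff.sum fun j _ => contDiff_pd (hT i j) j) (contDiff_pd hq i),
      pd_sum fun j => contDiff_pd (hT i j) j, pd_comm hq]
    simp only [pd_comm (hT i _) l]
  · have := pd_congr_on (g := fun _ => 0) hs h.2 l x hx
    rw [pd_sum fun j => contDiff_pd (hv j) j, pd_const] at this
    simpa only [pd_comm (hv _) l] using this

theorem StokesOn.lap_pressure (hs : IsOpen s) (hv : ∀ i, ContDiff ℝ ∞ (v i))
    (hT : ∀ i j, ContDiff ℝ ∞ (T i j)) (hq : ContDiff ℝ ∞ q) (h : StokesOn s v T q) :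
    ∀ x ∈ s, lap q x = -∑ i, ∑ j, pd (pd (T i j) j) i x := by
  intro x hx
  have h1 : ∀ i, pd (lap (v i)) i x = (∑ j, pd (pd (T i j) j) i x) +
      pd (pd q i) i x := fun i => by
    rw [pd_congr_on hs (fun y hy => h.1 y hy i) i x hx,
      pd_add (ContDiff.sum fun j _ => contDiff_pd (hT i j) j) (contDiff_pd hq i),
      pd_sum fun j => contDiff_pd (hT i j) j]
  have h2 : ∑ i, pd (lap (v i)) i x = 0 := by
    simp only [pd_lap (hv _)]
    rw [← lap_sum fun i => contDiff_pd (hv i) i, lap_congr_on (g := fun _ => 0) hs h.2 x hx]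
    simp only [lap, show ∀ l, pd (fun _ : E3 => (0 : ℝ)) l = fun _ => 0 from
      fun l => funext (pd_const 0 l), pd_const, Finset.sum_const_zero]
  simp only [h1, Finset.sum_add_distrib] at h2
  unfold lap
  linarith

section Mollify

variable {f g : E3 → ℝ} {x : E3} {r t : ℝ}

theorem affine_mem_ball (ht : 0 < t) (htr : t ≤ r) {y : E3} (hy : ‖y‖ ≤ 7 / 8) :
    x + t • y ∈ ball x r := by
  rw [mem_ball_iff_norm, add_sub_cancel_left, norm_smul, Real.norm_of_nonneg ht.le]
  nlinarith

theorem pairing_congr {f' : E3 → ℝ} (ht : 0 < t) (htr : t ≤ r)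
    (hg : ∀ y, 7 / 8 < ‖y‖ → g y = 0) (h : ∀ z ∈ ball x r, f z = f' z) :
    ∫ y, f (x + t • y) * g y = ∫ y, f' (x + t • y) * g y := by
  refine integral_congr_ae (Eventually.of_forall fun y => ?_)
  rcases le_or_gt ‖y‖ (7 / 8) with hy | hy
  · simp only [h _ (affine_mem_ball ht htr hy)]
  · simp only [hg y hy, mul_zero]

theorem abs_pairing_le {B : ℝ} (ht : 0 < t) (htr : t ≤ r) (hgc : Continuous g)
    (hg : ∀ y, 7 / 8 < ‖y‖ → g y = 0) (h : ∀ z ∈ ball x r, |f z| ≤ B) :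
    |∫ y, f (x + t • y) * g y| ≤ B * ∫ y, |g y| := by
  rw [← integral_const_mul, ← Real.norm_eq_abs]
  refine norm_integral_le_of_norm_le ((hgc.abs.integrable_of_hasCompactSupport
    (hasCompactSupport_of_vanish hg).abs).const_mul B) (Eventually.of_forall fun y => ?_)
  rw [norm_mul, Real.norm_eq_abs, Real.norm_eq_abs]
  rcases le_or_gt ‖y‖ (7 / 8) with hy | hy
  · exact mul_le_mul_of_nonneg_right (h _ (affine_mem_ball ht htr hy)) (abs_nonneg _)
  · simp [hg y hy]

theorem hasDerivAt_mollify (hf : ContDiff ℝ ∞ f) (hg : Continuous g)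
    (hg0 : ∀ y, 7 / 8 < ‖y‖ → g y = 0) (x : E3) (t : ℝ) :
    HasDerivAt (fun t => ∫ y, f (x + t • y) * g y)
      (∫ y, (∑ j, pd f j (x + t • y) * (y j * g y))) t := by
  have hset : ∀ F : E3 → ℝ, (∀ y, 7 / 8 < ‖y‖ → F y = 0) →
      ∫ y in closedBall (0 : E3) 1, F y = ∫ y, F y := fun F hF =>
    setIntegral_eq_integral_of_forall_compl_eq_zero fun y hy => hF y (by
      have : 1 < ‖y‖ := by simpa using hy
      linarith)
  have key := hasDerivAt_setIntegral_of_continuous (μ := (volume : Measure E3))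
    (isCompact_closedBall (0 : E3) 1)
    (F := fun t y => f (x + t • y) * g y)
    (F' := fun t y => ∑ j, pd f j (x + t • y) * (y j * g y)) ?_ ?_ ?_ t
  · rw [hset] at key
    · refine key.congr_of_eventuallyEq (Eventually.of_forall fun t => ?_)
      exact (hset _ fun y hy => by simp [hg0 y hy]).symm
    · intro y hy; simp [hg0 y hy]
  · exact (hf.continuous.comp (by fun_prop)).mul (hg.comp continuous_snd)
  · refine continuous_finsetSum _ fun j _ => ((contDiff_pd hf j).continuous.comp
      (by fun_prop)).mul (((contDiff_coord j).continuous.comp continuous_snd).mul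
        (hg.comp continuous_snd))
  · intro t y
    have h1 : HasDerivAt (fun t : ℝ => x + t • y) y t := by
      simpa using ((hasDerivAt_id t).smul_const y).const_add x
    have h2 := ((contDiff_differentiable hf (x + t • y)).hasFDerivAt.comp_hasDerivAt t h1)
    refine (h2.mul_const (g y)).congr_deriv ?_
    rw [fderiv_apply_eq_sum, Finset.sum_mul]
    exact Finset.sum_congr rfl fun j _ => by ring

end Mollify

variable {k φ : E3 → ℝ} {x : E3} {r t : ℝ}

/-- Rate of change of the mollifications of a Stokes velocity, in terms of the stress alone. -/
theorem StokesOn.mollify_rate (hv : ∀ i, ContDiff ℝ ∞ (v i))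
    (hT : ∀ i j, ContDiff ℝ ∞ (T i j)) (hq : ContDiff ℝ ∞ q) (h : StokesOn (ball x r) v T q)
    (hk : ContDiff ℝ ∞ k) (hk0 : ∀ y, 7 / 8 < ‖y‖ → k y = 0)
    (hkφ : ∀ j y, y j * φ y = pd (lap k) j y)
    (ht : 0 < t) (htr : t ≤ r) (i : Fin 3) :
    ∫ y, (∑ j, pd (v i) j (x + t • y) * (y j * φ y)) =
      (∑ j, ∫ y, T i j (x + t • y) * pd (lap k) j y) -
      ∑ j, ∑ l, ∫ y, T j l (x + t • y) * pd (pd (pd k i) j) l y := by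
  have ck1 := contDiff_pd hk
  have ck2 := fun i j => contDiff_pd (ck1 i) j
  have zk1 := pd_vanish hk0
  have zk2 := fun i j => pd_vanish (zk1 i) j
  have cm := contDiff_lap hk
  have zm : ∀ y, 7 / 8 < ‖y‖ → lap k y = 0 := fun y hy =>
    Finset.sum_eq_zero fun l _ => zk2 l l y hy
  have hc : ∀ {g : E3 → ℝ}, (∀ y, 7 / 8 < ‖y‖ → g y = 0) → HasCompactSupport g :=
    fun hg => hasCompactSupport_of_vanish hg
  -- integrate by parts once
  have s1 : ∫ y, (∑ j, pd (v i) j (x + t • y) * (y j * φ y)) =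
      -(t * ∫ y, lap (v i) (x + t • y) * lap k y) := by
    simp only [hkφ]
    rw [integral_finsetSum _ fun j _ => integrable_comp_affine_mul (contDiff_pd (hv i) j).continuous
      (contDiff_pd cm j).continuous (hc (pd_vanish zm j)) x t]
    simp only [integral_comp_affine_mul_pd (contDiff_pd (hv i) _) cm (hc zm)]
    rw [Finset.sum_neg_distrib, ← Finset.mul_sum, ← integral_finsetSum _ fun j _ =>
      integrable_comp_affine_mul (contDiff_pd (contDiff_pd (hv i) j) j).continuous
      cm.continuous (hc zm) x t]
    simp only [lap, Finset.sum_mul]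
  -- use the equation
  have s2 : ∫ y, lap (v i) (x + t • y) * lap k y =
      (∑ j, ∫ y, pd (T i j) j (x + t • y) * lap k y) +
        ∫ y, pd q i (x + t • y) * lap k y := by
    rw [pairing_congr ht htr zm fun z hz => h.1 z hz i]
    simp only [add_mul, Finset.sum_mul]
    rw [integral_add (integrable_finsetSum _ fun j _ => integrable_comp_affine_mul
      (contDiff_pd (hT i j) j).continuous cm.continuous (hc zm) x t)
      (integrable_comp_affine_mul (contDiff_pd hq i).continuous cm.continuous (hc zm) x t),
      integral_finsetSum _ fun j _ => integrable_comp_affine_mul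
      (contDiff_pd (hT i j) j).continuous cm.continuous (hc zm) x t]
  have s3 : ∀ j, t * ∫ y, pd (T i j) j (x + t • y) * lap k y =
      -∫ y, T i j (x + t • y) * pd (lap k) j y := fun j => by
    rw [integral_comp_affine_mul_pd (hT i j) cm (hc zm)]; ring
  have cqi := contDiff_pd hq i
  -- the pressure term
  have s4 : ∫ y, pd q i (x + t • y) * lap k y =
      t * (t * ∫ y, lap (pd q i) (x + t • y) * k y) := by
    have e : ∀ l, ∫ y, pd q i (x + t • y) * pd (pd k l) l y =
        t * (t * ∫ y, pd (pd (pd q i) l) l (x + t • y) * k y) := fun l => by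
      rw [integral_comp_affine_mul_pd cqi (ck1 l) (hc (zk1 l)),
        integral_comp_affine_mul_pd (contDiff_pd cqi l) hk (hc hk0)]; ring
    simp only [lap, Finset.mul_sum, Finset.sum_mul]
    rw [integral_finsetSum _ fun l _ => integrable_comp_affine_mul cqi.continuous
      (ck2 l l).continuous (hc (zk2 l l)) x t, integral_finsetSum _ fun l _ =>
      integrable_comp_affine_mul (contDiff_pd (contDiff_pd cqi l) l).continuous
      hk.continuous (hc hk0) x t, Finset.mul_sum, Finset.mul_sum]
    exact Finset.sum_congr rfl fun l _ => e l
  have cT3 := fun j l => contDiff_pd (contDiff_pd (contDiff_pd (hT j l) l) j) i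
  have s5 : ∫ y, lap (pd q i) (x + t • y) * k y = -∑ j, ∑ l,
      ∫ y, pd (pd (pd (T j l) l) j) i (x + t • y) * k y := by
    have e : ∀ z ∈ ball x r, lap (pd q i) z =
        -∑ j, ∑ l, pd (pd (pd (T j l) l) j) i z := fun z hz => by
      rw [← pd_lap hq, pd_congr_on isOpen_ball (h.lap_pressure isOpen_ball hv hT hq) i z hz, pd_neg,
        pd_sum fun j => ContDiff.sum fun l _ => contDiff_pd (contDiff_pd (hT j l) l) j]
      congr 1
      exact Finset.sum_congr rfl fun j _ =>
        pd_sum (fun l => contDiff_pd (contDiff_pd (hT j l) l) j) i z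
    rw [pairing_congr ht htr hk0 e]
    simp only [neg_mul, Finset.sum_mul, integral_neg]
    rw [integral_finsetSum _ fun j _ => integrable_finsetSum _ fun l _ =>
      integrable_comp_affine_mul (cT3 j l).continuous hk.continuous (hc hk0) x t]
    congr 1
    exact Finset.sum_congr rfl fun j _ => integral_finsetSum _ fun l _ =>
      integrable_comp_affine_mul (cT3 j l).continuous hk.continuous (hc hk0) x t
  have s6 : ∀ j l, ∫ y, T j l (x + t • y) * pd (pd (pd k i) j) l y =
      -(t * (t * (t * ∫ y, pd (pd (pd (T j l) l) j) i (x + t • y) * k y))) :=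
    fun j l => by
    rw [integral_comp_affine_mul_pd (hT j l) (ck2 i j) (hc (zk2 i j)),
      integral_comp_affine_mul_pd (contDiff_pd (hT j l) l) (ck1 i) (hc (zk1 i)),
      integral_comp_affine_mul_pd (contDiff_pd (contDiff_pd (hT j l) l) j) hk (hc hk0)]
    ring
  rw [s1, s2, s4, s5, mul_add, Finset.mul_sum]
  simp only [s3, s6, ← Finset.mul_sum, Finset.sum_neg_distrib]
  ring

/-- Interior gradient bound for the stationary Stokes system with a `C¹` stress. -/
theorem exists_stokes_gradient_bound : ∃ K : ℝ, 0 < K ∧ ∀ (v : Fin 3 → E3 → ℝ)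
    (T : Fin 3 → Fin 3 → E3 → ℝ) (q : E3 → ℝ), (∀ i, ContDiff ℝ ∞ (v i)) →
    (∀ i j, ContDiff ℝ ∞ (T i j)) → ContDiff ℝ ∞ q → ∀ (x : E3) (r A B : ℝ), 0 < r →
    StokesOn (ball x r) v T q → (∀ y ∈ ball x r, ∀ i, |v i y| ≤ A) →
    (∀ y ∈ ball x r, ∀ i j l, |pd (T i j) l y| ≤ B) →
    ∀ i l, |pd (v i) l x| ≤ K * (r * B + A / r) := by
  obtain ⟨k, φ, hk, hφ, hk0, hφ0, hkφ, hI⟩ := exists_biharmonic_kernel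
  set I := ∫ y, φ y
  have ck3 := fun i j l => contDiff_pd (contDiff_pd (contDiff_pd hk i) j) l
  have zk3 := fun i j l => pd_vanish (pd_vanish (pd_vanish hk0 i) j) l
  have cm := contDiff_lap hk
  have zm : ∀ y, 7 / 8 < ‖y‖ → lap k y = 0 := fun y hy =>
    Finset.sum_eq_zero fun l _ => pd_vanish (pd_vanish hk0 l) l y hy
  set K1 : Fin 3 → ℝ := fun i => (∑ j, ∫ y, |pd (lap k) j y|) +
    ∑ j, ∑ l, ∫ y, |pd (pd (pd k i) j) l y| with hK1
  set K2 : Fin 3 → ℝ := fun l => ∫ y, |pd φ l y| with hK2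
  have K1n : ∀ i, 0 ≤ K1 i := fun i => by positivity
  have K2n : ∀ i, 0 ≤ K2 i := fun i => by positivity
  refine ⟨((∑ i, K1 i) + (∑ l, K2 l) + 1) / I,
    div_pos (by positivity) hI, ?_⟩
  intro v T q hv hT hq x r A B hr h hA hB i l
  have hA0 : 0 ≤ A := (abs_nonneg _).trans (hA x (mem_ball_self hr) 0)
  have hB0 : 0 ≤ B := (abs_nonneg _).trans (hB x (mem_ball_self hr) 0 0 0)
  set V : ℝ → ℝ := fun t => ∫ y, pd (v i) l (x + t • y) * φ y with hV
  have hder := hasDerivAt_mollify (contDiff_pd (hv i) l) hφ.continuous hφ0 x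
  obtain ⟨t, ht, hslope⟩ := exists_hasDerivAt_eq_slope V _ hr
    (continuous_iff_continuousAt.2 fun t => (hder t).continuousAt).continuousOn
    fun t _ => hder t
  have hrate := (h.partial_deriv isOpen_ball hv hT hq l).mollify_rate
    (fun i => contDiff_pd (hv i) l)
    (fun i j => contDiff_pd (hT i j) l) (contDiff_pd hq l) hk hk0 hkφ ht.1 ht.2.le i
  have hbound : |∫ y, (∑ j, pd (pd (v i) l) j (x + t • y) * (y j * φ y))| ≤
      B * K1 i := by
    rw [hrate, hK1, mul_add, Finset.mul_sum, Finset.mul_sum]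
    refine (abs_sub _ _).trans (add_le_add ((Finset.abs_sum_le_sum_abs _ _).trans
      (Finset.sum_le_sum fun j _ => abs_pairing_le ht.1 ht.2.le (contDiff_pd cm j).continuous
        (pd_vanish zm j) fun z hz => hB z hz i j l)) ((Finset.abs_sum_le_sum_abs _ _).trans
      (Finset.sum_le_sum fun j _ => ?_)))
    rw [Finset.mul_sum]
    exact (Finset.abs_sum_le_sum_abs _ _).trans (Finset.sum_le_sum fun m _ =>
      abs_pairing_le ht.1 ht.2.le (ck3 i j m).continuous (zk3 i j m) fun z hz => hB z hz j m l)
  rw [hslope, sub_zero, abs_div, abs_of_pos hr, div_le_iff₀ hr] at hbound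
  have hV0 : V 0 = pd (v i) l x * I := by
    simp only [hV, zero_smul, add_zero, integral_const_mul, I]
  have hVr : |V r| ≤ A * K2 l / r := by
    have e := integral_comp_affine_mul_pd (hv i) hφ (hasCompactSupport_of_vanish hφ0) x r l
    have e2 := abs_pairing_le hr le_rfl (contDiff_pd hφ l).continuous (pd_vanish hφ0 l)
      fun z hz => hA z hz i
    rw [e, abs_neg, abs_mul, abs_of_pos hr] at e2
    rw [le_div_iff₀ hr, mul_comm]
    exact e2
  have hfin : |pd (v i) l x| * I ≤ B * K1 i * r + A * K2 l / r := by
    rw [← abs_of_pos hI, ← abs_mul, ← hV0]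
    have := abs_sub_abs_le_abs_sub (V 0) (V r)
    rw [abs_sub_comm] at this
    linarith
  have l1 : K1 i ≤ ∑ i, K1 i := Finset.single_le_sum (fun i _ => K1n i) (Finset.mem_univ i)
  have l2 : K2 l ≤ ∑ i, K2 i := Finset.single_le_sum (fun i _ => K2n i) (Finset.mem_univ l)
  have s1 : 0 ≤ ∑ i, K1 i := Finset.sum_nonneg fun i _ => K1n i
  have s2 : 0 ≤ ∑ i, K2 i := Finset.sum_nonneg fun i _ => K2n i
  rw [div_mul_eq_mul_div, le_div_iff₀ hI]
  refine hfin.trans ?_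
  have e1 : B * K1 i * r ≤ ((∑ i, K1 i) + (∑ l, K2 l) + 1) * (r * B) := by
    rw [show B * K1 i * r = K1 i * (r * B) by ring]
    exact mul_le_mul_of_nonneg_right (by linarith) (by positivity)
  have e2 : A * K2 l / r ≤ ((∑ i, K1 i) + (∑ l, K2 l) + 1) * (A / r) := by
    rw [show A * K2 l / r = K2 l * (A / r) by ring]
    exact mul_le_mul_of_nonneg_right (by linarith) (by positivity)
  linarith

end PointwiseEstimate

section InteriorEstimate

/-- The stationary Navier–Stokes system on `s`, in components. -/
def NSOn (s : Set E3) (u : Fin 3 → E3 → ℝ) (p : E3 → ℝ) : Prop :=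
  (∀ x ∈ s, ∀ i, -lap (u i) x + (∑ j, u j x * pd (u i) j x) + pd p i x = 0) ∧
    ∀ x ∈ s, ∑ j, pd (u j) j x = 0

variable {s : Set E3} {u : Fin 3 → E3 → ℝ} {p : E3 → ℝ}

theorem NSOn.mono {t : Set E3} (h : NSOn s u p) (hts : t ⊆ s) : NSOn t u p :=
  ⟨fun x hx => h.1 x (hts hx), fun x hx => h.2 x (hts hx)⟩

theorem NSOn.stokesOn (hu : ∀ i, ContDiff ℝ ∞ (u i)) (h : NSOn s u p) :
    StokesOn s u (fun i j y => u i y * u j y) p := by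
  refine ⟨fun x hx i => ?_, h.2⟩
  have h1 := h.1 x hx i
  have h2 : ∑ j, u i x * pd (u j) j x = 0 := by rw [← Finset.mul_sum, h.2 x hx, mul_zero]
  simp only [pd_mul (hu _) (hu _), Finset.sum_add_distrib, h2]
  have h3 : ∑ j, pd (u i) j x * u j x = ∑ j, u j x * pd (u i) j x :=
    Finset.sum_congr rfl fun j _ => mul_comm _ _
  linarith

theorem StokesOn.pds {v : Fin 3 → E3 → ℝ} {T : Fin 3 → Fin 3 → E3 → ℝ} {q : E3 → ℝ}
    (hs : IsOpen s) (hv : ∀ i, ContDiff ℝ ∞ (v i))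
    (hT : ∀ i j, ContDiff ℝ ∞ (T i j)) (hq : ContDiff ℝ ∞ q) (h : StokesOn s v T q)
    (α : List (Fin 3)) :
    StokesOn s (fun i => pds α (v i)) (fun i j => pds α (T i j)) (pds α q) := by
  induction α generalizing v T q with
  | nil => exact h
  | cons l α ih =>
    exact ih (fun i => contDiff_pd (hv i) l) (fun i j => contDiff_pd (hT i j) l)
      (contDiff_pd hq l) (h.partial_deriv hs hv hT hq l)

/-- An interpolation inequality at all scales with a small leading coefficient can be absorbed. -/
theorem le_of_scaled_inequality {g : E3 → ℝ} (hg : Continuous g) (hg0 : ∀ y, 0 ≤ g y) {x : E3}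
    {L a b : ℝ} (hL : 0 < L) (ha : 0 ≤ a)
    (h : ∀ y, ∀ r, 0 < r → r ≤ L - dist y x → ∀ G, 0 ≤ G → (∀ z ∈ ball y r, g z ≤ G) →
      g y ≤ a * r * G + b / r) :
    g x ≤ 4 * b * (1 + 2 * a * L) / L := by
  obtain ⟨y, hy, hmax⟩ := (isCompact_closedBall x L).exists_isMaxOn
    ⟨x, mem_closedBall_self hL.le⟩ (f := fun y => (L - dist y x) * g y) (by fun_prop)
  have hmax' : ∀ z ∈ closedBall x L, (L - dist z x) * g z ≤ (L - dist y x) * g y := hmax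
  set d := L - dist y x with hd
  set m := d * g y with hm
  have hx : L * g x ≤ m := by simpa using hmax' x (mem_closedBall_self hL.le)
  have hb : 0 ≤ b := by
    have h1 := h x
    by_contra! hb
    have hG : ∃ G, 0 ≤ G ∧ ∀ z ∈ closedBall x L, g z ≤ G := by
      obtain ⟨z, -, hz⟩ := (isCompact_closedBall x L).exists_isMaxOn
        ⟨x, mem_closedBall_self hL.le⟩ hg.continuousOn
      exact ⟨g z, hg0 z, hz⟩
    obtain ⟨G, hG0, hG⟩ := hG
    set r := min L (min 1 (-b / (2 * (a * G + 1)))) with hr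
    have hr0 : 0 < r := lt_min hL (lt_min one_pos (div_pos (by linarith) (by positivity)))
    have h2 := h1 r hr0 (by simp [hr]) G hG0
      fun z hz => hG z (ball_subset_closedBall (ball_subset_ball (min_le_left _ _) hz))
    have h3 : r * (2 * (a * G + 1)) ≤ -b := by
      rw [← le_div_iff₀ (by positivity)]
      exact (min_le_right _ _).trans (min_le_right _ _)
    have h5 : r ≤ 1 := (min_le_right _ _).trans (min_le_left _ _)
    have h4 : b / r ≤ b := by
      rw [div_le_iff₀ hr0]; nlinarith
    have := hg0 x
    nlinarith [mul_nonneg (mul_nonneg ha hr0.le) hG0]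
  have hd0 : 0 ≤ d := by
    have := mem_closedBall.1 hy
    linarith
  rw [le_div_iff₀ hL, mul_comm]
  refine hx.trans ?_
  rcases hd0.eq_or_lt with hd1 | hd1
  · rw [hm, ← hd1, zero_mul]; positivity
  set ε := (2 + 4 * a * L)⁻¹ with hε
  have hε0 : 0 < ε := by positivity
  have hε1 : ε * (2 + 4 * a * L) = 1 := inv_mul_cancel₀ (by positivity)
  have hε2 : ε ≤ 1 / 2 := by nlinarith [mul_nonneg hε0.le (mul_nonneg ha hL.le)]
  have hm0 : 0 ≤ m := mul_nonneg hd0 (hg0 y)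
  have hdL : d ≤ L := by
    have := dist_nonneg (x := y) (y := x)
    linarith
  have key := h y (ε * d) (by positivity) (by nlinarith) (2 * m / d) (by positivity) (by
    intro z hz
    have hz' := mem_ball.1 hz
    have h1 : d / 2 ≤ L - dist z x := by
      have := dist_triangle z y x
      nlinarith
    have h2 := hmax' z (by rw [mem_closedBall]; linarith)
    rw [le_div_iff₀ hd1]
    nlinarith [hg0 z])
  have h1 : m ≤ 2 * a * ε * d * m + b * (2 + 4 * a * L) := by
    calc m = d * g y := hm
      _ ≤ d * (a * (ε * d) * (2 * m / d) + b / (ε * d)) := mul_le_mul_of_nonneg_left key hd0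
      _ = 2 * a * ε * d * m + b / ε := by field_simp
      _ = _ := by rw [hε, div_inv_eq_mul]
  have h2 : 2 * a * ε * d ≤ 1 / 2 := by
    have : 2 * a * ε * d ≤ 2 * a * ε * L := mul_le_mul_of_nonneg_left hdL (by positivity)
    nlinarith
  nlinarith

/-- Interior estimates of all orders for bounded stationary Navier–Stokes velocities. -/
theorem exists_interior_estimate (M : ℝ) (n : ℕ) : ∀ ρ : ℝ, 0 < ρ →
    ∃ c : ℝ, 0 ≤ c ∧ ∀ (u : Fin 3 → E3 → ℝ) (p : E3 → ℝ), (∀ i, ContDiff ℝ ∞ (u i)) →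
    ContDiff ℝ ∞ p → ∀ (C : ℝ), C ≤ M → ∀ x : E3, NSOn (ball x ρ) u p →
    (∀ y ∈ ball x ρ, ∀ i, |u i y| ≤ C) → ∀ i, ‖iteratedFDeriv ℝ n (u i) x‖ ≤ c * C := by
  induction n using Nat.strong_induction_on with
  | _ n ih =>
  rcases n with _ | n
  · intro ρ hρ
    refine ⟨1, zero_le_one, fun u p hu hp C _ x _ hb i => ?_⟩
    simpa using hb x (mem_ball_self hρ) i
  intro ρ hρ
  obtain ⟨K, hK, hgrad⟩ := exists_stokes_gradient_bound
  choose c hc0 hc using fun m : Fin (n + 1) => ih m m.2 (ρ / 2) (half_pos hρ)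
  set D := 1 + ∑ m, c m with hD
  have hcD : ∀ m, c m ≤ D := fun m => by
    have := Finset.single_le_sum (fun i _ => hc0 i) (Finset.mem_univ m)
    linarith
  have hD0 : 0 ≤ D := add_nonneg zero_le_one (Finset.sum_nonneg fun i _ => hc0 i)
  set L := ρ / 2 with hL
  have hL0 : 0 < L := half_pos hρ
  set M' := max M 0 with hM'
  have hM0 : 0 ≤ M' := le_max_right _ _
  set a := 3 ^ (n + 2) * K * 2 ^ (n + 1) * M' with ha
  set b := 3 ^ (n + 2) * K * (2 ^ (n + 1) * L ^ 2 * D ^ 2 * M' + D) with hb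
  refine ⟨4 * b * (1 + 2 * a * L) / L, by positivity, fun u p hu hp C hCM x hns hbd i => ?_⟩
  have hC0 : 0 ≤ C := (abs_nonneg _).trans (hbd x (mem_ball_self hρ) 0)
  have hCM' : C ≤ M' := hCM.trans (le_max_left _ _)
  set g : E3 → ℝ := fun y => ∑ i, ‖iteratedFDeriv ℝ (n + 1) (u i) y‖ with hg
  have hgi : ∀ i y, ‖iteratedFDeriv ℝ (n + 1) (u i) y‖ ≤ g y := fun i y =>
    Finset.single_le_sum (f := fun i => ‖iteratedFDeriv ℝ (n + 1) (u i) y‖)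
      (fun i _ => norm_nonneg _) (Finset.mem_univ i)
  have hlow : ∀ y ∈ ball x L, ∀ m, m ≤ n → ∀ i, ‖iteratedFDeriv ℝ m (u i) y‖ ≤ D * C := by
    intro y hy m hm i
    have hsub : ball y L ⊆ ball x ρ := ball_subset_ball' (by
      have := mem_ball.1 hy
      linarith)
    exact (hc ⟨m, Nat.lt_succ_of_le hm⟩ u p hu hp C hCM y (hns.mono hsub)
      (fun z hz => hbd z (hsub hz)) i).trans (mul_le_mul_of_nonneg_right (hcD _) hC0)
  refine (hgi i x).trans ((le_of_scaled_inequality (L := L) (a := a) (b := b * C)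
    (continuous_finsetSum _ fun i _ => continuous_norm_iteratedFDeriv (hu i) _)
    (fun y => Finset.sum_nonneg fun i _ => norm_nonneg _) hL0 (by positivity) ?_).trans
    (le_of_eq (by ring)))
  intro y r hr hrL G hG0 hG
  have hyr : ball y r ⊆ ball x L := ball_subset_ball' (by linarith)
  have hrL' : r ≤ L := hrL.trans (by linarith [dist_nonneg (x := y) (y := x)])
  have hLρ : ball x L ⊆ ball x ρ := ball_subset_ball (by linarith)
  set B := 2 ^ (n + 1) * (C * G + D ^ 2 * C ^ 2) with hB
  have hprod : ∀ z ∈ ball y r, ∀ i j,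
      ‖iteratedFDeriv ℝ (n + 1) (fun y => u i y * u j y) z‖ ≤ B := by
    intro z hz i j
    refine (norm_iteratedFDeriv_mul_le (hu i) (hu j) z (mod_cast le_top)).trans ?_
    have e : B = ∑ m ∈ Finset.range (n + 1 + 1), ((n + 1).choose m : ℝ) *
        (C * G + D ^ 2 * C ^ 2) := by
      rw [← Finset.sum_mul, hB]
      congr 1
      exact_mod_cast (Nat.sum_range_choose (n + 1)).symm
    rw [e]
    refine Finset.sum_le_sum fun m hm => ?_
    rw [mul_assoc]
    refine mul_le_mul_of_nonneg_left ?_ (Nat.cast_nonneg _)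
    have hCG : 0 ≤ C * G := mul_nonneg hC0 hG0
    have hDC : 0 ≤ D ^ 2 * C ^ 2 := by positivity
    have hzero : ∀ i, ‖iteratedFDeriv ℝ 0 (u i) z‖ ≤ C := fun i => by
      simpa using hbd z (hLρ (hyr hz)) i
    rcases Nat.eq_zero_or_pos m with rfl | hm0
    · have := mul_le_mul (hzero i) ((hgi j z).trans (hG z hz)) (norm_nonneg _) hC0
      rw [Nat.sub_zero]
      linarith
    rcases (Nat.lt_succ_iff.1 (Finset.mem_range.1 hm)).eq_or_lt with rfl | hm1
    · have := mul_le_mul ((hgi i z).trans (hG z hz)) (hzero j) (norm_nonneg _) hG0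
      rw [Nat.sub_self]
      linarith
    · have := mul_le_mul (hlow z (hyr hz) m (by omega) i) (hlow z (hyr hz) (n + 1 - m) (by omega) j)
        (norm_nonneg _) (by positivity)
      nlinarith
  have hst := (hns.mono (hyr.trans hLρ)).stokesOn hu
  have hpds : ∀ i (β : List (Fin 3)), β.length = n + 1 →
      |pds β (u i) y| ≤ K * (r * B + D * C / r) := by
    intro i β hβ
    obtain ⟨α, l, rfl⟩ : ∃ α l, β = α ++ [l] := by
      rcases List.eq_nil_or_concat β with h | ⟨α, l, h⟩
      · simp [h] at hβ
      · exact ⟨α, l, by simpa using h⟩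
    have hα : α.length = n := by simpa using hβ
    rw [pds_append_singleton]
    refine hgrad _ _ _ (fun i => contDiff_pds (hu i) α)
      (fun i j => contDiff_pds ((hu i).mul (hu j)) α) (contDiff_pds hp α) y r (D * C) B hr
      (hst.pds isOpen_ball hu (fun i j => (hu i).mul (hu j)) hp α) ?_ ?_ i l
    · intro z hz i
      exact (abs_pds_le (hu i) α z).trans (hlow z (hyr hz) _ hα.le i)
    · intro z hz i j l
      rw [← pds_append_singleton]
      refine (abs_pds_le ((hu i).mul (hu j)) _ z).trans ?_
      rw [List.length_append, hα]
      exact hprod z hz i j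
  have hmain : g y ≤ 3 ^ (n + 2) * (K * (r * B + D * C / r)) := by
    refine (Finset.sum_le_sum fun i _ =>
      norm_iteratedFDeriv_le_of_pds (hu i) (n + 1) y (hpds i)).trans (le_of_eq ?_)
    simp; ring
  refine hmain.trans ?_
  have h1 : r * (2 ^ (n + 1) * (C * G)) ≤ 2 ^ (n + 1) * M' * r * G := by
    have : C * (r * G * 2 ^ (n + 1)) ≤ M' * (r * G * 2 ^ (n + 1)) :=
      mul_le_mul_of_nonneg_right hCM' (by positivity)
    linarith
  have h2 : r * (2 ^ (n + 1) * (D ^ 2 * C ^ 2)) ≤ 2 ^ (n + 1) * L ^ 2 * D ^ 2 * M' * C / r := by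
    rw [le_div_iff₀ hr]
    have : r ^ 2 * C ≤ L ^ 2 * M' :=
      mul_le_mul (pow_le_pow_left₀ hr.le hrL' 2) hCM' hC0 (by positivity)
    have := mul_le_mul_of_nonneg_right this (show 0 ≤ 2 ^ (n + 1) * D ^ 2 * C by positivity)
    linarith
  calc 3 ^ (n + 2) * (K * (r * B + D * C / r))
      = 3 ^ (n + 2) * K * (r * (2 ^ (n + 1) * (C * G)) + r * (2 ^ (n + 1) * (D ^ 2 * C ^ 2)) +
        D * C / r) := by rw [hB]; ring
    _ ≤ 3 ^ (n + 2) * K * (2 ^ (n + 1) * M' * r * G + 2 ^ (n + 1) * L ^ 2 * D ^ 2 * M' * C / r +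
        D * C / r) := by gcongr
    _ = a * r * G + b * C / r := by rw [ha, hb]; ring

end InteriorEstimate

section Decay

theorem pd_const_mul_comp_smul (f : E3 → ℝ) (c L : ℝ) (j : Fin 3) (y : E3) :
    pd (fun y => c * f (L • y)) j y = c * L * pd f j (L • y) := by
  have h1 : fderiv ℝ (fun y => f (L • y)) y = L • fderiv ℝ f (L • y) := fderiv_comp_smul L
  have h2 : fderiv ℝ (fun y => c * f (L • y)) y = c • fderiv ℝ (fun y => f (L • y)) y :=
    congrFun (fderiv_const_smul_field (𝕜 := ℝ) (f := fun y => f (L • y)) c) y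
  simp only [pd, h2, h1]
  simp [mul_assoc]

theorem lap_const_mul_comp_smul (f : E3 → ℝ) (c L : ℝ) (y : E3) :
    lap (fun y => c * f (L • y)) y = c * L ^ 2 * lap f (L • y) := by
  unfold lap
  simp only [fun l => funext (pd_const_mul_comp_smul f c L l), pd_const_mul_comp_smul,
    Finset.mul_sum]
  exact Finset.sum_congr rfl fun l _ => by ring

/-- The scaling symmetry of the Navier–Stokes system. -/
theorem NSOn.scale {s : Set E3} {u : Fin 3 → E3 → ℝ} {p : E3 → ℝ} (h : NSOn s u p) (L : ℝ) :
    NSOn {y | L • y ∈ s} (fun i y => L * u i (L • y)) (fun y => L ^ 2 * p (L • y)) := by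
  refine ⟨fun y hy i => ?_, fun y hy => ?_⟩
  · have := h.1 _ hy i
    simp only [lap_const_mul_comp_smul, pd_const_mul_comp_smul]
    have e : ∑ j, L * u j (L • y) * (L * L * pd (u i) j (L • y)) =
        L ^ 3 * ∑ j, u j (L • y) * pd (u i) j (L • y) := by
      rw [Finset.mul_sum]
      exact Finset.sum_congr rfl fun j _ => by ring
    rw [e]
    linear_combination L ^ 3 * this
  · simp only [pd_const_mul_comp_smul, ← Finset.mul_sum, h.2 _ hy, mul_zero]

theorem norm_iteratedFDeriv_const_mul {f : E3 → ℝ} (hf : ContDiff ℝ ∞ f) (c : ℝ) (k : ℕ)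
    (x : E3) :
    ‖iteratedFDeriv ℝ k (fun y => c * f y) x‖ = |c| * ‖iteratedFDeriv ℝ k f x‖ := by
  have h := iteratedFDeriv_const_smul_apply' (𝕜 := ℝ) (a := c) (i := k) (f := f) (x := x)
    ((hf.of_le (mod_cast le_top)).contDiffAt)
  simp only [smul_eq_mul] at h
  rw [h, norm_smul, Real.norm_eq_abs]

theorem norm_iteratedFDeriv_const_mul_comp_smul {f : E3 → ℝ} (hf : ContDiff ℝ ∞ f) (c L : ℝ)
    (k : ℕ) (x : E3) :
    ‖iteratedFDeriv ℝ k (fun y => c * f (L • y)) x‖ =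
      |c| * |L| ^ k * ‖iteratedFDeriv ℝ k f (L • x)‖ := by
  rw [norm_iteratedFDeriv_const_mul (f := fun y => f (L • y)) (hf.comp (contDiff_const_smul L)),
    iteratedFDeriv_comp_const_smul _ (hf.of_le (mod_cast le_top)), norm_smul, norm_pow,
    Real.norm_eq_abs, mul_assoc]

/-- All derivatives of `f` decay on `Ω` at the rates dictated by scaling of degree `-m`. -/
def Dec (Ω : Set E3) (R C : ℝ) (c : ℕ → ℝ) (m : ℕ) (f : E3 → ℝ) : Prop :=
  ∀ k, ∀ x ∈ Ω, ‖iteratedFDeriv ℝ k f x‖ ≤ c k * C / (R + ‖x‖) ^ (k + m)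

/-- The constants of a product in the Leibniz rule. -/
def leibnizConst (c d : ℕ → ℝ) (k : ℕ) : ℝ :=
  ∑ i ∈ Finset.range (k + 1), (k.choose i : ℝ) * (c i * d (k - i))

theorem leibnizConst_nonneg {c d : ℕ → ℝ} (hc : ∀ k, 0 ≤ c k) (hd : ∀ k, 0 ≤ d k) (k : ℕ) :
    0 ≤ leibnizConst c d k :=
  Finset.sum_nonneg fun i _ => mul_nonneg (Nat.cast_nonneg _) (mul_nonneg (hc i) (hd _))

variable {Ω : Set E3} {R C C' : ℝ} {c d : ℕ → ℝ} {m n : ℕ} {f g : E3 → ℝ}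

theorem Dec.partial_deriv (hf : ContDiff ℝ ∞ f) (h : Dec Ω R C c m f) (j : Fin 3) :
    Dec Ω R C (fun k => c (k + 1)) (m + 1) (pd f j) := fun k x hx => by
  have := (norm_iteratedFDeriv_pd_le hf j k x).trans (h (k + 1) x hx)
  rwa [show k + 1 + m = k + (m + 1) by ring] at this

theorem Dec.mono_const (hR : 0 < R) (h : Dec Ω R C c m f) (hcd : ∀ k, c k * C ≤ d k * C') :
    Dec Ω R C' d m f := fun k x hx =>
  (h k x hx).trans (by have := hcd k; gcongr)

theorem Dec.mono {Ω' : Set E3} (h : Dec Ω R C c m f) (hΩ : Ω' ⊆ Ω) : Dec Ω' R C c m f :=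
  fun k x hx => h k x (hΩ hx)

theorem Dec.congr_on (hΩ : IsOpen Ω) (h : Dec Ω R C c m f) (hfg : ∀ x ∈ Ω, g x = f x) :
    Dec Ω R C c m g := fun k x hx => by
  rw [iteratedFDeriv_congr_on hΩ hfg k x hx]
  exact h k x hx

theorem Dec.add (hf : ContDiff ℝ ∞ f) (hg : ContDiff ℝ ∞ g) (h : Dec Ω R C c m f)
    (h' : Dec Ω R C d m g) : Dec Ω R C (fun k => c k + d k) m (fun x => f x + g x) :=
  fun k x hx => by
    have e := iteratedFDeriv_add_apply (𝕜 := ℝ) (i := k) (f := f) (g := g) (x := x)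
      ((hf.of_le (mod_cast le_top)).contDiffAt) ((hg.of_le (mod_cast le_top)).contDiffAt)
    change ‖iteratedFDeriv ℝ k (f + g) x‖ ≤ _
    rw [e, add_mul, add_div]
    exact (norm_add_le _ _).trans (add_le_add (h k x hx) (h' k x hx))

theorem Dec.neg (h : Dec Ω R C c m f) : Dec Ω R C c m (fun x => -f x) := fun k x hx => by
  have := h k x hx
  rwa [← norm_neg, ← iteratedFDeriv_neg_apply] at this

theorem Dec.sum {f : Fin 3 → E3 → ℝ} (hf : ∀ i, ContDiff ℝ ∞ (f i))
    (h : ∀ i, Dec Ω R C c m (f i)) : Dec Ω R C (fun k => 3 * c k) m (fun x => ∑ i, f i x) :=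
  fun k x hx => by
    rw [iteratedFDeriv_fun_sum_apply fun i _ => ((hf i).of_le (mod_cast le_top)).contDiffAt]
    refine (norm_sum_le _ _).trans ((Finset.sum_le_sum fun i _ => h i k x hx).trans
      (le_of_eq ?_))
    simp; ring

theorem Dec.mul (hR : 0 < R) (hf : ContDiff ℝ ∞ f) (hg : ContDiff ℝ ∞ g) (h : Dec Ω R C c m f)
    (h' : Dec Ω R C' d n g) :
    Dec Ω R (C * C') (leibnizConst c d) (m + n) (fun x => f x * g x) := fun k x hx => by
  refine (norm_iteratedFDeriv_mul_le hf hg x (mod_cast le_top)).trans ?_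
  rw [leibnizConst, Finset.sum_mul, Finset.sum_div]
  refine Finset.sum_le_sum fun i hi => ?_
  have hi' : i ≤ k := Nat.lt_succ_iff.1 (Finset.mem_range.1 hi)
  have h0 := h i x hx
  have e : (k.choose i : ℝ) * (c i * d (k - i)) * (C * C') / (R + ‖x‖) ^ (k + (m + n)) =
      k.choose i * (c i * C / (R + ‖x‖) ^ (i + m)) *
        (d (k - i) * C' / (R + ‖x‖) ^ (k - i + n)) := by
    have : k + (m + n) = (i + m) + (k - i + n) := by omega
    rw [this, pow_add]
    have : R + ‖x‖ ≠ 0 := by positivity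
    field_simp
  rw [e, mul_assoc, mul_assoc]
  exact mul_le_mul_of_nonneg_left (mul_le_mul h0 (h' _ x hx) (norm_nonneg _)
    ((norm_nonneg _).trans h0)) (Nat.cast_nonneg _)

theorem Dec.of_pd (hf : ContDiff ℝ ∞ f) (h0 : ∀ x ∈ Ω, |f x| ≤ c 0 * C / (R + ‖x‖) ^ m)
    (h : ∀ j, Dec Ω R C d (m + 1) (pd f j)) (hcd : ∀ k, c (k + 1) = 3 * d k) :
    Dec Ω R C c m f := by
  rintro (_ | k) x hx
  · simpa using h0 x hx
  · refine (norm_iteratedFDeriv_succ_le hf k x).trans ((Finset.sum_le_sum fun j _ =>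
      h j k x hx).trans (le_of_eq ?_))
    rw [hcd, show k + 1 + m = k + (m + 1) by ring]
    simp; ring

theorem abs_sub_le_of_abs_pd_le {B : ℝ} (hf : ContDiff ℝ ∞ f) {x y : E3}
    (h : ∀ w ∈ segment ℝ x y, ∀ i, |pd f i w| ≤ B) : |f y - f x| ≤ 3 * B * ‖y - x‖ := by
  refine Convex.norm_image_sub_le_of_norm_fderiv_le (𝕜 := ℝ) (s := segment ℝ x y)
    (fun w _ => contDiff_differentiable hf w) (fun w hw => ?_) (convex_segment x y)
    (left_mem_segment ℝ x y) (right_mem_segment ℝ x y)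
  rw [← norm_iteratedFDeriv_one]
  refine (norm_iteratedFDeriv_succ_le hf 0 w).trans ?_
  refine (Finset.sum_le_sum fun i _ => (?_ : _ ≤ B)).trans (le_of_eq (by simp))
  simpa using h w hw i

end Decay

section Decay

theorem exists_velocity_decay (M : ℝ) : ∃ c : ℕ → ℝ, (∀ k, 0 ≤ c k) ∧
    ∀ (u : Fin 3 → E3 → ℝ) (p : E3 → ℝ), (∀ i, ContDiff ℝ ∞ (u i)) → ContDiff ℝ ∞ p →
    ∀ C : ℝ, C ≤ M → NSOn {x | 11 / 10 < ‖x‖} u p →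
    (∀ x, 11 / 10 < ‖x‖ → ∀ i, |u i x| ≤ C / (1 + ‖x‖)) →
    ∀ i, Dec {x | 23 / 20 < ‖x‖} 1 C c 1 (u i) := by
  choose c hc0 hc using fun n => exists_interior_estimate (2 * M) n (1 / 25) (by norm_num)
  refine ⟨fun k => 2 * c k * 2 ^ (k + 1), fun k => by have := hc0 k; positivity, ?_⟩
  intro u p hu hp C hCM hns hb i k x hx
  set L := ‖x‖ with hL
  have hx' : 23 / 20 < L := hx
  have hL0 : 0 < L := by linarith
  have hC0 : 0 ≤ C := by
    have := (abs_nonneg _).trans (hb x (by linarith) 0)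
    by_contra! h
    exact absurd this (not_le.2 (div_neg_of_neg_of_pos h (by linarith)))
  set z := L⁻¹ • x with hz
  have hzn : ‖z‖ = 1 := by
    rw [hz, norm_smul, norm_inv, norm_norm, inv_mul_cancel₀ hL0.ne']
  have hLz : L • z = x := by rw [hz, smul_smul, mul_inv_cancel₀ hL0.ne', one_smul]
  have hball : ∀ y ∈ ball z (1 / 25), 24 / 25 < ‖y‖ := fun y hy => by
    have h1 := mem_ball_iff_norm'.1 hy
    have h2 := norm_sub_norm_le z y
    rw [hzn] at h2
    linarith
  have hfar : ∀ y ∈ ball z (1 / 25), 11 / 10 < ‖L • y‖ := fun y hy => by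
    have := hball y hy
    rw [norm_smul, Real.norm_of_nonneg hL0.le]
    nlinarith
  have key := hc k (fun i y => L * u i (L • y)) (fun y => L ^ 2 * p (L • y))
    (fun i => contDiff_const.mul ((hu i).comp (contDiff_const_smul L)))
    (contDiff_const.mul (hp.comp (contDiff_const_smul L))) (2 * C) (by linarith) z
    ((hns.scale L).mono hfar) (fun y hy i => by
      have h1 := hb _ (hfar y hy) i
      have h2 := hball y hy
      rw [norm_smul, Real.norm_of_nonneg hL0.le, le_div_iff₀ (by positivity)] at h1
      rw [abs_mul, abs_of_pos hL0]
      nlinarith [abs_nonneg (u i (L • y)), mul_nonneg hL0.le (abs_nonneg (u i (L • y)))]) i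
  rw [norm_iteratedFDeriv_const_mul_comp_smul (hu i), hLz, abs_of_pos hL0, ← pow_succ'] at key
  have h1 : (1 + L) ^ (k + 1) ≤ 2 ^ (k + 1) * L ^ (k + 1) := by
    rw [← mul_pow]
    exact pow_le_pow_left₀ (by positivity) (by linarith) _
  rw [le_div_iff₀ (by positivity)]
  calc _ ≤ ‖iteratedFDeriv ℝ k (u i) x‖ * (2 ^ (k + 1) * L ^ (k + 1)) :=
        mul_le_mul_of_nonneg_left h1 (norm_nonneg _)
    _ = 2 ^ (k + 1) * (L ^ (k + 1) * ‖iteratedFDeriv ℝ k (u i) x‖) := by ring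
    _ ≤ 2 ^ (k + 1) * (c k * (2 * C)) := mul_le_mul_of_nonneg_left key (by positivity)
    _ = _ := by ring

theorem exists_inner_eq_zero (y : E3) : ∃ z : E3, z ≠ 0 ∧ inner ℝ y z = 0 := by
  by_cases h : y 0 = 0
  · exact ⟨ee 0, by simp [ee], by simp [ee, EuclideanSpace.inner_single_right, h]⟩
  · refine ⟨!₂[-y 1, y 0, 0], fun h0 => h ?_, ?_⟩
    · simpa using congrArg (fun w : E3 => w 1) h0
    · simp [PiLp.inner_apply, Fin.sum_univ_three]
      ring

theorem half_le_norm_of_mem_segment {x y w : E3} {b : ℝ} (hb : 0 ≤ b) (hx : b ≤ ‖x‖)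
    (hy : b ≤ ‖y‖) (hxy : 0 ≤ inner ℝ x y) (hw : w ∈ segment ℝ x y) : b / 2 ≤ ‖w‖ := by
  obtain ⟨s, t, hs, ht, hst, rfl⟩ := hw
  have h : ‖s • x + t • y‖ ^ 2 = s ^ 2 * ‖x‖ ^ 2 + 2 * (s * t * inner ℝ x y) +
      t ^ 2 * ‖y‖ ^ 2 := by
    rw [norm_add_sq_real, norm_smul, norm_smul, inner_smul_left, inner_smul_right,
      Real.norm_of_nonneg hs, Real.norm_of_nonneg ht]
    simp; ring
  have h1 : s ^ 2 * b ^ 2 ≤ s ^ 2 * ‖x‖ ^ 2 := by gcongr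
  have h2 : t ^ 2 * b ^ 2 ≤ t ^ 2 * ‖y‖ ^ 2 := by gcongr
  have h3 := mul_nonneg (mul_nonneg hs ht) hxy
  have h4 : 1 / 2 ≤ s ^ 2 + t ^ 2 := by nlinarith [sq_nonneg (s - t)]
  refine abs_le_of_sq_le_sq' ?_ (norm_nonneg _) |>.2
  nlinarith [sq_nonneg b]

/-- A function with cubically decaying gradient tends to a constant at infinity. -/
theorem exists_limit_of_gradient_decay {p : E3 → ℝ} (hp : ContDiff ℝ ∞ p) {b B : ℝ}
    (hb : 1 ≤ b) (hB : 0 ≤ B) (h : ∀ x, b < ‖x‖ → ∀ i, |pd p i x| ≤ B / (1 + ‖x‖) ^ 3) :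
    ∃ p₀ : ℝ, ∀ x, b < ‖x‖ → |p x - p₀| ≤ 24 * B / (1 + ‖x‖) ^ 2 := by
  have hstep : ∀ x, b < ‖x‖ → ∀ n : ℕ, dist (p ((2 : ℝ) ^ n • x)) (p ((2 : ℝ) ^ (n + 1) • x)) ≤
      12 * B / (1 + ‖x‖) ^ 2 * (1 / 2) ^ n := by
    intro x hx n
    have hone : (1 : ℝ) ≤ 2 ^ n := one_le_pow₀ (by norm_num)
    set y := (2 : ℝ) ^ n • x with hy
    have hyn : ‖y‖ = 2 ^ n * ‖x‖ := by rw [hy, norm_smul]; simp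
    have hxy : ‖x‖ ≤ ‖y‖ := by rw [hyn]; nlinarith [norm_nonneg x]
    have e : (2 : ℝ) ^ (n + 1) • x = y + y := by rw [pow_succ', mul_smul, two_smul]
    rw [e, dist_comm, Real.dist_eq]
    have h1 := abs_sub_le_of_abs_pd_le hp (x := y) (y := y + y) (B := B / (1 + ‖y‖) ^ 3) (by
      rintro w ⟨s, t, hs, ht, hst, rfl⟩ i
      have hw : ‖y‖ ≤ ‖s • y + t • (y + y)‖ := by
        rw [show s • y + t • (y + y) = (s + 2 * t) • y by module, norm_smul (s + 2 * t) y,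
          Real.norm_of_nonneg (by positivity)]
        nlinarith [norm_nonneg y]
      refine (h _ (by linarith) i).trans ?_
      gcongr)
    rw [add_sub_cancel_left] at h1
    refine h1.trans ?_
    have h2 : (2 : ℝ) ^ n * (1 + ‖x‖) ≤ 2 * (1 + ‖y‖) := by rw [hyn]; nlinarith
    have h3 : ((2 : ℝ) ^ n) * (1 + ‖x‖) ^ 2 ≤ 4 * (1 + ‖y‖) ^ 2 := by
      have := pow_le_pow_left₀ (by positivity) h2 2
      nlinarith [sq_nonneg (1 + ‖x‖)]
    have hy0 : 0 ≤ ‖y‖ := norm_nonneg y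
    have hx0 : 0 ≤ ‖x‖ := norm_nonneg x
    calc 3 * (B / (1 + ‖y‖) ^ 3) * ‖y‖ ≤ 3 * (B / (1 + ‖y‖) ^ 3) * (1 + ‖y‖) := by
          gcongr; linarith
      _ = 3 * B / (1 + ‖y‖) ^ 2 := by field_simp
      _ ≤ 12 * B / (2 ^ n * (1 + ‖x‖) ^ 2) := by
          rw [div_le_div_iff₀ (by positivity) (by positivity)]
          nlinarith
      _ = _ := by rw [one_div_pow]; field_simp
  have hlim : ∀ x, b < ‖x‖ → ∃ P, Tendsto (fun n : ℕ => p ((2 : ℝ) ^ n • x)) atTop (nhds P) :=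
    fun x hx => cauchySeq_tendsto_of_complete
      (cauchySeq_of_le_geometric (1 / 2) _ (by norm_num) (hstep x hx))
  have hsame : ∀ x y : E3, b < ‖x‖ → b < ‖y‖ → 0 ≤ inner ℝ x y →
      Tendsto (fun n : ℕ => p ((2 : ℝ) ^ n • y) - p ((2 : ℝ) ^ n • x)) atTop (nhds 0) := by
    intro x y hx hy hxy
    have hgeo : Tendsto (fun n : ℕ => 24 * B * ‖y - x‖ * (1 / 2) ^ n) atTop (nhds 0) := by
      simpa using (tendsto_pow_atTop_nhds_zero_of_lt_one (r := (1 / 2 : ℝ)) (by norm_num)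
        (by norm_num)).const_mul (24 * B * ‖y - x‖)
    refine squeeze_zero_norm' ((eventually_ge_atTop 2).mono fun n hn => ?_) hgeo
    have h4 : (4 : ℝ) ≤ 2 ^ n := by
      calc (4 : ℝ) = 2 ^ 2 := by norm_num
        _ ≤ 2 ^ n := pow_le_pow_right₀ (by norm_num) hn
    have h1 := abs_sub_le_of_abs_pd_le hp (x := (2 : ℝ) ^ n • x) (y := (2 : ℝ) ^ n • y)
      (B := B / (2 ^ n / 2) ^ 3) (by
      rintro w ⟨s, t, hs, ht, hst, rfl⟩ i
      have hw := half_le_norm_of_mem_segment (by linarith) hx.le hy.le hxy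
        ⟨s, t, hs, ht, hst, rfl⟩
      have e : ‖s • (2 : ℝ) ^ n • x + t • (2 : ℝ) ^ n • y‖ = 2 ^ n * ‖s • x + t • y‖ := by
        rw [show s • (2 : ℝ) ^ n • x + t • (2 : ℝ) ^ n • y =
          (2 : ℝ) ^ n • (s • x + t • y) by module, norm_smul]
        simp
      have hbig : 2 ^ n * (b / 2) ≤ ‖s • (2 : ℝ) ^ n • x + t • (2 : ℝ) ^ n • y‖ := by
        rw [e]; gcongr
      refine (h _ (by nlinarith) i).trans ?_
      gcongr
      nlinarith)
    rw [← smul_sub, norm_smul, Real.norm_of_nonneg (by positivity)] at h1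
    refine h1.trans ?_
    rw [one_div_pow]
    calc 3 * (B / (2 ^ n / 2) ^ 3) * (2 ^ n * ‖y - x‖)
        = 24 * B * ‖y - x‖ * (1 / 2 ^ n) * (1 / 2 ^ n) := by field_simp; ring
      _ ≤ 24 * B * ‖y - x‖ * (1 / 2 ^ n) * 1 := by
        gcongr
        rw [div_le_one (by positivity)]
        linarith
      _ = _ := mul_one _
  have hlimit : ∀ x y : E3, b < ‖x‖ → b < ‖y‖ → 0 ≤ inner ℝ x y → ∀ P,
      Tendsto (fun n : ℕ => p ((2 : ℝ) ^ n • x)) atTop (nhds P) →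
      Tendsto (fun n : ℕ => p ((2 : ℝ) ^ n • y)) atTop (nhds P) := by
    intro x y hx hy hxy P hP
    simpa using hP.add (hsame x y hx hy hxy)
  have hfar : ∃ e : E3, b < ‖e‖ :=
    ⟨(b + 1) • ee 0, by rw [norm_smul, norm_ee, Real.norm_of_nonneg (by linarith)]; linarith⟩
  obtain ⟨e, he⟩ := hfar
  obtain ⟨P, hP⟩ := hlim e he
  refine ⟨P, fun x hx => ?_⟩
  have hxP : Tendsto (fun n : ℕ => p ((2 : ℝ) ^ n • x)) atTop (nhds P) := by
    obtain ⟨z, hz0, hz⟩ := exists_inner_eq_zero x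
    have hz1 : 0 < ‖z‖ := norm_pos_iff.2 hz0
    obtain ⟨σ, hσ, hσz⟩ : ∃ σ : ℝ, |σ| = (b + 1) / ‖z‖ ∧ 0 ≤ inner ℝ e (σ • z) := by
      rcases le_total 0 (inner ℝ e z) with h0 | h0
      · refine ⟨(b + 1) / ‖z‖, abs_of_nonneg (by positivity), ?_⟩
        rw [inner_smul_right]; positivity
      · refine ⟨-((b + 1) / ‖z‖), by rw [abs_neg]; exact abs_of_nonneg (by positivity), ?_⟩
        rw [inner_smul_right]
        exact mul_nonneg_of_nonpos_of_nonpos (neg_nonpos.2 (by positivity)) h0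
    have hb' : b < ‖σ • z‖ := by
      rw [norm_smul, Real.norm_eq_abs, hσ, div_mul_cancel₀ _ hz1.ne']; linarith
    refine hlimit (σ • z) x hb' hx ?_ P (hlimit e (σ • z) he hb' hσz P hP)
    rw [real_inner_comm, inner_smul_right, hz, mul_zero]
  have := dist_le_of_le_geometric_of_tendsto₀ (1 / 2) _ (by norm_num) (hstep x hx) hxP
  rw [pow_zero, one_smul, Real.dist_eq] at this
  refine this.trans (le_of_eq ?_)
  ring

/-- Decay of all derivatives of a Navier–Stokes solution with critically decaying velocity. -/
theorem exists_solution_decay {M : ℝ} (hM : 0 ≤ M) : ∃ c : ℕ → ℝ, (∀ k, 0 ≤ c k) ∧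
    ∀ (u : Fin 3 → E3 → ℝ) (p : E3 → ℝ), (∀ i, ContDiff ℝ ∞ (u i)) → ContDiff ℝ ∞ p →
    ∀ C : ℝ, C ≤ M → NSOn {x | 11 / 10 < ‖x‖} u p →
    (∀ x, 11 / 10 < ‖x‖ → ∀ i, |u i x| ≤ C / (1 + ‖x‖)) →
    (∀ i, Dec {x | 23 / 20 < ‖x‖} 1 C c 1 (u i)) ∧
    ∃ p₀ : ℝ, Dec {x | 23 / 20 < ‖x‖} 1 C c 2 (fun x => p x - p₀) := by
  obtain ⟨c, hc0, hc⟩ := exists_velocity_decay M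
  set q : ℕ → ℝ := fun k => 3 * c (k + 2) + M * (3 * leibnizConst c (fun k => c (k + 1)) k) with hq
  have hl0 := leibnizConst_nonneg hc0 (d := fun k => c (k + 1)) fun k => hc0 (k + 1)
  have hq0 : ∀ k, 0 ≤ q k := fun k => by
    have := hc0 (k + 2)
    have := hl0 k
    positivity
  set e : ℕ → ℝ := fun k => match k with
    | 0 => 24 * q 0
    | k + 1 => 3 * q k with he
  have he0 : ∀ k, 0 ≤ e k := fun k => by
    cases k with
    | zero => exact mul_nonneg (by norm_num) (hq0 0)
    | succ k => exact mul_nonneg (by norm_num) (hq0 k)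
  refine ⟨fun k => c k + e k, fun k => add_nonneg (hc0 k) (he0 k), ?_⟩
  intro u p hu hp C hCM hns hb
  have hC0 : 0 ≤ C := by
    have h2 : ‖(2 : ℝ) • ee 0‖ = 2 := by rw [norm_smul, norm_ee]; norm_num
    have := (abs_nonneg _).trans (hb ((2 : ℝ) • ee 0) (by rw [h2]; norm_num) 0)
    by_contra! h
    exact absurd this (not_le.2 (div_neg_of_neg_of_pos h (by positivity)))
  have hdec := hc u p hu hp C hCM hns hb
  have hopen : IsOpen {x : E3 | 23 / 20 < ‖x‖} := isOpen_lt continuous_const continuous_norm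
  refine ⟨fun i => (hdec i).mono_const one_pos fun k =>
    mul_le_mul_of_nonneg_right (le_add_of_nonneg_right (he0 k)) hC0, ?_⟩
  have hpi : ∀ i, Dec {x | 23 / 20 < ‖x‖} 1 C q 3 (pd p i) := by
    intro i
    have h1 := Dec.sum (fun j => contDiff_pd (contDiff_pd (hu i) j) j) fun j =>
      ((hdec i).partial_deriv (hu i) j).partial_deriv (contDiff_pd (hu i) j) j
    have h2 := (Dec.sum (fun j => (hu j).mul (contDiff_pd (hu i) j)) fun j =>
      (hdec j).mul one_pos (hu j) (contDiff_pd (hu i) j) ((hdec i).partial_deriv (hu i) j)).neg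
    have h3 := h2.mono_const (C' := C)
      (d := fun k => M * (3 * leibnizConst c (fun k => c (k + 1)) k)) one_pos fun k => by
        have := mul_le_mul_of_nonneg_left (mul_le_mul_of_nonneg_right hCM hC0)
          (mul_nonneg (by norm_num : (0 : ℝ) ≤ 3) (hl0 k))
        linarith
    refine (h1.add (ContDiff.sum fun j _ => contDiff_pd (contDiff_pd (hu i) j) j)
      (ContDiff.sum fun j _ => (hu j).mul (contDiff_pd (hu i) j)).neg h3).congr_on hopen
      fun x hx => ?_
    have := hns.1 x (lt_trans (show (11 / 10 : ℝ) < 23 / 20 by norm_num) hx) i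
    rw [lap] at this
    linarith
  obtain ⟨p₀, hp₀⟩ := exists_limit_of_gradient_decay hp (b := 23 / 20) (B := q 0 * C) (by norm_num)
    (mul_nonneg (hq0 0) hC0) fun x hx i => by simpa using hpi i 0 x hx
  refine ⟨p₀, ?_⟩
  have hfin : Dec {x | 23 / 20 < ‖x‖} 1 C e 2 (fun x => p x - p₀) := by
    refine Dec.of_pd (d := q) (hp.sub contDiff_const) (fun x hx => ?_) (fun j => ?_) fun k => rfl
    · refine (hp₀ x hx).trans (le_of_eq ?_)
      simp only [he]; ring
    · have : pd (fun x => p x - p₀) j = pd p j := by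
        ext x
        rw [pd_sub hp contDiff_const, pd_const, sub_zero]
      rw [this]
      exact hpi j
  exact hfin.mono_const one_pos fun k =>
    mul_le_mul_of_nonneg_right (le_add_of_nonneg_left (hc0 k)) hC0

end Decay

section LineIntegrals

/-- Integral of `f` along a segment of direction `e` based at `A x`. -/
def lineInt (A : E3 →L[ℝ] E3) (e : E3) (α β : ℝ) (f : E3 → ℝ) (x : E3) : ℝ :=
  ∫ s in Set.Icc α β, f (A x + s • e)

variable {A : E3 →L[ℝ] E3} {e : E3} {α β : ℝ} {f : E3 → ℝ}

theorem hasFDerivAt_lineInt (hf : ContDiff ℝ ∞ f) (x : E3) :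
    HasFDerivAt (lineInt A e α β f) (∫ s in Set.Icc α β, (fderiv ℝ f (A x + s • e)).comp A) x := by
  have hf' : Continuous (fderiv ℝ f) := hf.continuous_fderiv (by simp)
  refine hasFDerivAt_setIntegral_of_continuous (μ := volume) isCompact_Icc
    (F := fun x s => f (A x + s • e)) (F' := fun x s => (fderiv ℝ f (A x + s • e)).comp A)
    (hf.continuous.comp (by fun_prop)) ?_ (fun x s => ?_) x
  · exact (hf'.comp (by fun_prop)).clm_comp continuous_const
  · exact (contDiff_differentiable hf _).hasFDerivAt.comp x (A.hasFDerivAt.add_const (s • e))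

theorem pd_lineInt (hf : ContDiff ℝ ∞ f) (l : Fin 3) (x : E3) :
    pd (lineInt A e α β f) l x = ∑ k, (A (ee l)) k * lineInt A e α β (pd f k) x := by
  have hf' : Continuous (fderiv ℝ f) := hf.continuous_fderiv (by simp)
  have hc : Continuous fun s : ℝ => (fderiv ℝ f (A x + s • e)).comp A :=
    (hf'.comp (by fun_prop)).clm_comp continuous_const
  rw [pd, (hasFDerivAt_lineInt hf x).fderiv,
    ContinuousLinearMap.integral_apply hc.continuousOn.integrableOn_Icc]
  simp only [ContinuousLinearMap.comp_apply, fderiv_apply_eq_sum]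
  rw [integral_finsetSum]
  · simp only [lineInt, integral_const_mul]
  · intro k _
    exact (continuous_const.mul ((contDiff_pd hf k).continuous.comp
      (by fun_prop))).continuousOn.integrableOn_Icc

theorem contDiff_lineInt (hf : ContDiff ℝ ∞ f) : ContDiff ℝ ∞ (lineInt A e α β f) := by
  rw [contDiff_infty]
  intro n
  induction n generalizing f with
  | zero =>
    exact contDiff_zero.2 (continuous_iff_continuousAt.2 fun x =>
      (hasFDerivAt_lineInt hf x).continuousAt)
  | succ n ih =>
    rw [Nat.cast_succ, contDiff_succ_iff_fderiv]
    refine ⟨fun x => (hasFDerivAt_lineInt hf x).differentiableAt, by simp, ?_⟩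
    rw [fderiv_eq_sum]
    refine ContDiff.sum fun l _ => ?_
    have h : ContDiff ℝ n (pd (lineInt A e α β f) l) := by
      rw [funext (pd_lineInt hf l)]
      exact ContDiff.sum fun k _ => contDiff_const.mul (ih (contDiff_pd hf k))
    exact h.smul contDiff_const

/-- Smooth functions are mapped to smooth functions, with control of the derivatives of order at
most `n` by the derivatives of order at most `n`. -/
structure Tame (P : (E3 → ℝ) → E3 → ℝ) : Prop where
  smooth : ∀ f, ContDiff ℝ ∞ f → ContDiff ℝ ∞ (P f)
  bound : ∀ n : ℕ, ∃ C : ℝ, 0 ≤ C ∧ ∀ f, ContDiff ℝ ∞ f → ∀ b : ℝ,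
    (∀ m ≤ n, ∀ x, ‖iteratedFDeriv ℝ m f x‖ ≤ b) →
      ∀ m ≤ n, ∀ x, ‖iteratedFDeriv ℝ m (P f) x‖ ≤ C * b

theorem norm_iteratedFDeriv_sum_le {f : Fin 3 → E3 → ℝ} (hf : ∀ i, ContDiff ℝ ∞ (f i)) (m : ℕ)
    (x : E3) {B : ℝ} (h : ∀ i, ‖iteratedFDeriv ℝ m (f i) x‖ ≤ B) :
    ‖iteratedFDeriv ℝ m (fun y => ∑ i, f i y) x‖ ≤ 3 * B := by
  rw [iteratedFDeriv_fun_sum_apply fun i _ => ((hf i).of_le (mod_cast le_top)).contDiffAt]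
  exact (norm_sum_le _ _).trans ((Finset.sum_le_sum fun i _ => h i).trans (le_of_eq (by simp)))

theorem norm_iteratedFDeriv_lineInt_le (m : ℕ) : ∃ C : ℝ, 0 ≤ C ∧ ∀ f, ContDiff ℝ ∞ f →
    ∀ b : ℝ, (∀ x, ‖iteratedFDeriv ℝ m f x‖ ≤ b) →
    ∀ x, ‖iteratedFDeriv ℝ m (lineInt A e α β f) x‖ ≤ C * b := by
  induction m with
  | zero =>
    refine ⟨volume.real (Set.Icc α β), by positivity, fun f hf b hb x => ?_⟩
    simp only [norm_iteratedFDeriv_zero] at hb ⊢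
    rw [mul_comm]
    exact norm_setIntegral_le_of_norm_le_const measure_Icc_lt_top fun s _ => hb _
  | succ m ih =>
    obtain ⟨C, hC0, hC⟩ := ih
    refine ⟨3 * (3 * (‖A‖ * C)), by positivity, fun f hf b hb x => ?_⟩
    refine (norm_iteratedFDeriv_succ_le (contDiff_lineInt hf) m x).trans
      ((Finset.sum_le_sum fun l _ => (?_ : _ ≤ 3 * (‖A‖ * (C * b)))).trans
        (le_of_eq (by simp; ring)))
    rw [funext (pd_lineInt hf l)]
    refine norm_iteratedFDeriv_sum_le (fun k => contDiff_const.mul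
      (contDiff_lineInt (contDiff_pd hf k))) m x fun k => ?_
    rw [norm_iteratedFDeriv_const_mul (contDiff_lineInt (contDiff_pd hf k))]
    refine mul_le_mul ?_ (hC _ (contDiff_pd hf k) b (fun y =>
      (norm_iteratedFDeriv_pd_le hf k m y).trans (hb y)) x) (norm_nonneg _) (norm_nonneg _)
    refine (PiLp.norm_apply_le (A (ee l)) k).trans ((A.le_opNorm _).trans ?_)
    rw [norm_ee, mul_one]

theorem exists_uniform_bound {q : ℕ → ℝ → Prop} (hq : ∀ m, ∃ C, 0 ≤ C ∧ q m C)
    (hmono : ∀ m C C', C ≤ C' → q m C → q m C') (n : ℕ) : ∃ C, 0 ≤ C ∧ ∀ m ≤ n, q m C := by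
  choose C hC0 hC using hq
  refine ⟨∑ m ∈ Finset.range (n + 1), C m, Finset.sum_nonneg fun m _ => hC0 m, fun m hm =>
    hmono m _ _ (Finset.single_le_sum (fun i _ => hC0 i)
      (Finset.mem_range.2 (Nat.lt_succ_of_le hm))) (hC m)⟩

theorem tame_lineInt : Tame (lineInt A e α β) := by
  refine ⟨fun f hf => contDiff_lineInt hf, fun n => ?_⟩
  obtain ⟨C, hC0, hC⟩ := exists_uniform_bound
    (q := fun m C => ∀ f, ContDiff ℝ ∞ f → ∀ b : ℝ, 0 ≤ b → (∀ x, ‖iteratedFDeriv ℝ m f x‖ ≤ b) →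
      ∀ x, ‖iteratedFDeriv ℝ m (lineInt A e α β f) x‖ ≤ C * b)
    (fun m => by
      obtain ⟨C, hC0, hC⟩ := norm_iteratedFDeriv_lineInt_le (A := A) (e := e) (α := α) (β := β) m
      exact ⟨C, hC0, fun f hf b _ hb => hC f hf b hb⟩)
    (fun m C C' h hC f hf b hb0 hb x => (hC f hf b hb0 hb x).trans
      (mul_le_mul_of_nonneg_right h hb0)) n
  exact ⟨C, hC0, fun f hf b hb m hm x => hC m hm f hf b
    ((norm_nonneg _).trans (hb m hm 0)) (hb m hm) x⟩

theorem Tame.comp {P Q : (E3 → ℝ) → E3 → ℝ} (hP : Tame P) (hQ : Tame Q) :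
    Tame fun f => P (Q f) := by
  refine ⟨fun f hf => hP.smooth _ (hQ.smooth _ hf), fun n => ?_⟩
  obtain ⟨C, hC0, hC⟩ := hP.bound n
  obtain ⟨D, hD0, hD⟩ := hQ.bound n
  refine ⟨C * D, by positivity, fun f hf b hb m hm x => ?_⟩
  rw [mul_assoc]
  exact hC _ (hQ.smooth _ hf) _ (hD f hf b hb) m hm x

theorem Tame.id_sub {P : (E3 → ℝ) → E3 → ℝ} (hP : Tame P) : Tame fun f x => f x - P f x := by
  refine ⟨fun f hf => hf.sub (hP.smooth _ hf), fun n => ?_⟩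
  obtain ⟨C, hC0, hC⟩ := hP.bound n
  refine ⟨1 + C, by positivity, fun f hf b hb m hm x => ?_⟩
  have e := iteratedFDeriv_sub_apply (𝕜 := ℝ) (i := m) (f := f) (g := P f) (x := x)
    ((hf.of_le (mod_cast le_top)).contDiffAt)
    (((hP.smooth _ hf).of_le (mod_cast le_top)).contDiffAt)
  change ‖iteratedFDeriv ℝ m (f - P f) x‖ ≤ _
  rw [e, add_mul, one_mul]
  exact (norm_sub_le _ _).trans (add_le_add (hb m hm x) (hC f hf b hb m hm x))

theorem exists_bound_iteratedFDeriv_coord {a : ℝ → ℝ} (ha : ContDiff ℝ ∞ a)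
    (hac : HasCompactSupport a) (j : Fin 3) (m : ℕ) :
    ∃ C, 0 ≤ C ∧ ∀ x : E3, ‖iteratedFDeriv ℝ m (fun x : E3 => a (x j)) x‖ ≤ C := by
  obtain ⟨C, hC⟩ := (hac.iteratedFDeriv (𝕜 := ℝ) m).exists_bound_of_continuous
    (ha.continuous_iteratedFDeriv (m := m) (mod_cast le_top))
  have hC0 : 0 ≤ C := (norm_nonneg _).trans (hC 0)
  refine ⟨C, hC0, fun x => ?_⟩
  change ‖iteratedFDeriv ℝ m (a ∘ (EuclideanSpace.proj j : E3 →L[ℝ] ℝ)) x‖ ≤ C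
  rw [ContinuousLinearMap.iteratedFDeriv_comp_right _ ha x (mod_cast le_top)]
  refine (ContinuousMultilinearMap.norm_compContinuousLinearMap_le _ _).trans ?_
  refine (mul_le_of_le_one_right (norm_nonneg _) ?_).trans (hC _)
  exact Finset.prod_le_one (fun _ _ => norm_nonneg _) fun _ _ => norm_proj_le j

theorem tame_mul {h : E3 → ℝ} (hh : ContDiff ℝ ∞ h)
    (hb : ∀ m, ∃ C, 0 ≤ C ∧ ∀ x, ‖iteratedFDeriv ℝ m h x‖ ≤ C) : Tame fun f x => h x * f x := by
  refine ⟨fun f hf => hh.mul hf, fun n => ?_⟩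
  obtain ⟨C, hC0, hC⟩ := exists_uniform_bound hb
    (fun m C C' h hC x => (hC x).trans h) n
  refine ⟨2 ^ n * C, by positivity, fun f hf b hb m hm x => ?_⟩
  have hb0 : 0 ≤ b := (norm_nonneg _).trans (hb m hm 0)
  refine (norm_iteratedFDeriv_mul_le hh hf x (mod_cast le_top)).trans ?_
  calc _ ≤ ∑ i ∈ Finset.range (m + 1), (m.choose i : ℝ) * (C * b) := by
        refine Finset.sum_le_sum fun i hi => ?_
        have := Finset.mem_range.1 hi
        rw [mul_assoc]
        exact mul_le_mul_of_nonneg_left (mul_le_mul (hC i (by omega) x) (hb _ (by omega) x)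
          (norm_nonneg _) hC0) (Nat.cast_nonneg _)
    _ = 2 ^ m * (C * b) := by
        rw [← Finset.sum_mul]
        congr 1
        exact_mod_cast Nat.sum_range_choose m
    _ ≤ 2 ^ n * C * b := by
        rw [mul_assoc]
        gcongr
        norm_num

end LineIntegrals

section DivergenceSolver

theorem lineInt_eq_intervalIntegral {A : E3 →L[ℝ] E3} {e : E3} {α β : ℝ} (h : α ≤ β) (f : E3 → ℝ)
    (x : E3) : lineInt A e α β f x = ∫ s in α..β, f (A x + s • e) := by
  rw [lineInt, integral_Icc_eq_integral_Ioc, intervalIntegral.integral_of_le h]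

/-- The projection setting the coordinate `j` to zero. -/
def killCoord (j : Fin 3) : E3 →L[ℝ] E3 :=
  ContinuousLinearMap.id ℝ E3 - (EuclideanSpace.proj j : E3 →L[ℝ] ℝ).smulRight (ee j)

theorem killCoord_apply (j k : Fin 3) (x : E3) :
    killCoord j x k = if k = j then 0 else x k := by
  by_cases h : k = j
  · subst h; simp [killCoord, ee]
  · simp [killCoord, ee, h]

theorem ee_apply (j k : Fin 3) : ee j k = if k = j then (1 : ℝ) else 0 := by
  simp [ee]

theorem killCoord_add_smul (j : Fin 3) (x : E3) : killCoord j x + x j • ee j = x := by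
  simp [killCoord]

theorem killCoord_killCoord_add_smul (j : Fin 3) (x : E3) (s : ℝ) :
    killCoord j (killCoord j x + s • ee j) = killCoord j x := by
  ext k
  simp only [killCoord_apply, PiLp.add_apply, PiLp.smul_apply, ee_apply, smul_eq_mul]
  split_ifs <;> simp

/-- A nonnegative smooth function of integral one supported in `[-1, 1]`. -/
def unitMass : ℝ → ℝ :=
  (⟨1 / 2, 1, by norm_num, by norm_num⟩ : ContDiffBump (0 : ℝ)).normed volume

theorem contDiff_unitMass : ContDiff ℝ ∞ unitMass := ContDiffBump.contDiff_normed _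

theorem unitMass_nonneg (t : ℝ) : 0 ≤ unitMass t := ContDiffBump.nonneg_normed _ _

theorem hasCompactSupport_unitMass : HasCompactSupport unitMass :=
  ContDiffBump.hasCompactSupport_normed _

theorem support_unitMass : Function.support unitMass = ball 0 1 :=
  ContDiffBump.support_normed_eq _

theorem unitMass_eq_zero {t : ℝ} (ht : 1 ≤ |t|) : unitMass t = 0 := by
  by_contra h
  have : t ∈ Function.support unitMass := h
  rw [support_unitMass, mem_ball_zero_iff, Real.norm_eq_abs] at this
  linarith

theorem unitMass_zero_ne : unitMass 0 ≠ 0 := by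
  have : (0 : ℝ) ∈ Function.support unitMass := by rw [support_unitMass]; simp
  exact this

theorem setIntegral_unitMass : ∫ s in Set.Icc (-(8 / 5) : ℝ) (8 / 5), unitMass s = 1 := by
  rw [setIntegral_eq_integral_of_forall_compl_eq_zero]
  · exact ContDiffBump.integral_normed _
  · intro t ht
    refine unitMass_eq_zero ?_
    by_contra! h
    exact ht ⟨by linarith [(abs_lt.1 h).1], by linarith [(abs_lt.1 h).2]⟩

/-- A smooth cutoff function of one variable. -/
def coordCutoff : ℝ → ℝ :=
  (⟨12 / 5, 16 / 5, by norm_num, by norm_num⟩ : ContDiffBump (0 : ℝ))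

theorem contDiff_coordCutoff : ContDiff ℝ ∞ coordCutoff := ContDiffBump.contDiff _

theorem hasCompactSupport_coordCutoff : HasCompactSupport coordCutoff :=
  ContDiffBump.hasCompactSupport _

theorem coordCutoff_eq_one {t : ℝ} (ht : |t| ≤ 12 / 5) : coordCutoff t = 1 :=
  ContDiffBump.one_of_mem_closedBall _ (by simpa using ht)

theorem coordCutoff_eq_zero {t : ℝ} (ht : 16 / 5 ≤ |t|) : coordCutoff t = 0 :=
  ContDiffBump.zero_of_le_dist _ (by simpa using ht)

/-- The function `f` vanishes outside the cube `[-8/5, 8/5]³`. -/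
def CubeSupported (f : E3 → ℝ) : Prop := ∀ x : E3, ∀ i, 8 / 5 < |x i| → f x = 0

theorem CubeSupported.eq_zero_of_norm {f : E3 → ℝ} (hf : CubeSupported f) {x : E3}
    (hx : 14 / 5 < ‖x‖) : f x = 0 := by
  by_contra h
  have hb : ∀ i, |x i| ≤ 8 / 5 := fun i => by
    by_contra! hi
    exact h (hf x i hi)
  have h2 : ‖x‖ ^ 2 ≤ 3 * (8 / 5) ^ 2 := by
    rw [EuclideanSpace.norm_sq_eq]
    refine (Finset.sum_le_sum fun i _ => pow_le_pow_left₀ (norm_nonneg _) (hb i) 2).trans ?_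
    simp
  nlinarith [norm_nonneg x]

theorem CubeSupported.hasCompactSupport {f : E3 → ℝ} (hf : CubeSupported f) :
    HasCompactSupport f :=
  hasCompactSupport_of_vanish (R := 14 / 5) fun _ hx => hf.eq_zero_of_norm hx

/-- Integral over the chord of the cube through `x` in direction `j`. -/
def chordInt (j : Fin 3) : (E3 → ℝ) → E3 → ℝ := lineInt (killCoord j) (ee j) (-(8 / 5)) (8 / 5)

/-- Redistribution of the mass of each chord in direction `j` along a fixed profile. -/
def spread (j : Fin 3) (f : E3 → ℝ) (x : E3) : ℝ := unitMass (x j) * chordInt j f x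

/-- Truncated primitive in direction `j`. -/
def truncPrimitive (j : Fin 3) (f : E3 → ℝ) (x : E3) : ℝ :=
  coordCutoff (x j) *
    lineInt (ContinuousLinearMap.id ℝ E3) (ee j) (-(32 / 5)) 0 (fun y => f y - spread j f y) x

theorem tame_spread (j : Fin 3) : Tame (spread j) :=
  Tame.comp (P := fun f x => unitMass (x j) * f x)
    (tame_mul (contDiff_unitMass.comp (contDiff_coord j))
      (exists_bound_iteratedFDeriv_coord contDiff_unitMass hasCompactSupport_unitMass j))
    tame_lineInt

theorem tame_truncPrimitive (j : Fin 3) : Tame (truncPrimitive j) :=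
  Tame.comp (P := fun f x => coordCutoff (x j) * f x)
    (tame_mul (contDiff_coordCutoff.comp (contDiff_coord j))
      (exists_bound_iteratedFDeriv_coord contDiff_coordCutoff hasCompactSupport_coordCutoff j))
    (Tame.comp tame_lineInt (tame_spread j).id_sub)

theorem lineInt_eq_zero_of_cubeSupported {f : E3 → ℝ} (hf : CubeSupported f) {A : E3 →L[ℝ] E3}
    {i j : Fin 3} (hij : i ≠ j) {x : E3} (hA : A x i = x i) (hx : 8 / 5 < |x i|) (α β : ℝ) :
    lineInt A (ee j) α β f x = 0 := by
  refine (setIntegral_congr_fun (g := fun _ => (0 : ℝ)) measurableSet_Icc fun s _ => ?_).trans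
    (integral_zero _ _)
  refine hf _ i ?_
  simpa [ee_apply, hij, hA] using hx

theorem CubeSupported.spread {f : E3 → ℝ} (hf : CubeSupported f) (j : Fin 3) :
    CubeSupported (spread j f) := by
  intro x i hx
  by_cases hij : i = j
  · subst hij
    rw [_root_.spread, unitMass_eq_zero (by linarith), zero_mul]
  · rw [_root_.spread, chordInt, lineInt_eq_zero_of_cubeSupported hf hij
      (by simp [killCoord_apply, hij]) hx, mul_zero]

theorem CubeSupported.sub {f g : E3 → ℝ} (hf : CubeSupported f) (hg : CubeSupported g) :
    CubeSupported fun x => f x - g x := fun x i hx => by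
  simp only [hf x i hx, hg x i hx, sub_zero]

theorem chordInt_spread (j : Fin 3) (f : E3 → ℝ) (x : E3) :
    chordInt j (spread j f) x = chordInt j f x := by
  have h : ∀ s : ℝ, spread j f (killCoord j x + s • ee j) = unitMass s * chordInt j f x := by
    intro s
    simp only [spread, chordInt, lineInt, killCoord_killCoord_add_smul]
    simp [killCoord_apply, ee_apply]
  rw [chordInt, lineInt]
  simp only [h]
  rw [integral_mul_const, setIntegral_unitMass, one_mul]
  rfl

theorem chordInt_sub_spread {f : E3 → ℝ} (hf : ContDiff ℝ ∞ f) (j : Fin 3) (x : E3) :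
    chordInt j (fun y => f y - spread j f y) x = 0 := by
  have h : chordInt j (fun y => f y - spread j f y) x
      = chordInt j f x - chordInt j (spread j f) x := by
    simp only [chordInt, lineInt]
    refine integral_sub ?_ ?_
    · exact (hf.continuous.comp (by fun_prop)).continuousOn.integrableOn_Icc
    · exact (((tame_spread j).smooth f hf).continuous.comp
        (by fun_prop)).continuousOn.integrableOn_Icc
  rw [h, chordInt_spread, sub_self]

theorem primitive_eq_zero {k : E3 → ℝ} (hk : ContDiff ℝ ∞ k) (hs : CubeSupported k) (j : Fin 3)
    (h0 : ∀ x, chordInt j k x = 0) {x : E3} (hx : 8 / 5 < |x j|) (hx' : x j < 16 / 5) :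
    lineInt (ContinuousLinearMap.id ℝ E3) (ee j) (-(32 / 5)) 0 k x = 0 := by
  set φ : ℝ → ℝ := fun t => k (killCoord j x + t • ee j) with hφ
  have hφc : Continuous φ := hk.continuous.comp (by fun_prop)
  have hφi : ∀ a b, IntervalIntegrable φ volume a b := fun a b => hφc.intervalIntegrable a b
  have hz : ∀ t, 8 / 5 < |t| → φ t = 0 := fun t ht => hs _ j (by
    simpa [killCoord_apply, ee_apply] using ht)
  have hzi : ∀ a b, (∀ t ∈ Set.uIoc a b, 8 / 5 < |t|) → ∫ t in a..b, φ t = 0 := by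
    intro a b hab
    rw [intervalIntegral.integral_congr_ae (g := fun _ => (0 : ℝ))]
    · simp
    · exact Eventually.of_forall fun t ht => hz t (hab t ht)
  have e : lineInt (ContinuousLinearMap.id ℝ E3) (ee j) (-(32 / 5)) 0 k x
      = ∫ t in (x j - 32 / 5)..(x j), φ t := by
    rw [lineInt_eq_intervalIntegral (by norm_num)]
    have h1 : ∀ s : ℝ, k (ContinuousLinearMap.id ℝ E3 x + s • ee j) = φ (x j + s) := by
      intro s
      simp only [hφ, ContinuousLinearMap.id_apply, add_smul, ← add_assoc, killCoord_add_smul]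
    simp only [h1]
    rw [intervalIntegral.integral_comp_add_left]
    congr 1
    ring
  rw [e]
  rcases lt_or_ge (x j) 0 with hn | hn
  · rw [abs_of_neg hn] at hx
    refine hzi _ _ fun t ht => ?_
    rw [Set.uIoc_of_le (by linarith)] at ht
    rw [abs_of_neg (by linarith [ht.2])]
    linarith [ht.2]
  · rw [abs_of_nonneg hn] at hx
    rw [← intervalIntegral.integral_add_adjacent_intervals (hφi _ (-(8 / 5))) (hφi _ _),
      ← intervalIntegral.integral_add_adjacent_intervals (hφi _ (8 / 5)) (hφi _ (x j))]
    have e1 : ∫ t in (-(8 / 5))..(8 / 5), φ t = 0 := by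
      rw [← h0 x, chordInt, lineInt_eq_intervalIntegral (by norm_num)]
    have e2 : ∫ t in (8 / 5)..(x j), φ t = 0 := by
      refine hzi _ _ fun t ht => ?_
      rw [Set.uIoc_of_le hx.le] at ht
      rw [abs_of_pos (by linarith [ht.1])]
      exact ht.1
    have e3 : ∫ t in (x j - 32 / 5)..(-(8 / 5)), φ t = 0 := by
      rw [intervalIntegral.integral_congr_ae (g := fun _ => (0 : ℝ))]
      · simp
      · have : ∀ᵐ t : ℝ, t ≠ -(8 / 5) := by simp [ae_iff]
        filter_upwards [this] with t ht1 ht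
        rw [Set.uIoc_of_le (by linarith)] at ht
        have := lt_of_le_of_ne ht.2 ht1
        refine hz t ?_
        rw [abs_of_neg (by linarith)]
        linarith
    rw [e1, e2, e3]
    simp

theorem pd_primitive {k : E3 → ℝ} (hk : ContDiff ℝ ∞ k) (hs : CubeSupported k) (j : Fin 3)
    {x : E3} (hx : x j < 24 / 5) :
    pd (lineInt (ContinuousLinearMap.id ℝ E3) (ee j) (-(32 / 5)) 0 k) j x = k x := by
  rw [pd_lineInt hk]
  simp only [ContinuousLinearMap.id_apply, ee_apply, ite_mul, one_mul, zero_mul]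
  rw [Finset.sum_ite_eq' Finset.univ j, if_pos (Finset.mem_univ _),
    lineInt_eq_intervalIntegral (by norm_num)]
  have hd : ∀ s ∈ Set.uIcc (-(32 / 5) : ℝ) 0, HasDerivAt (fun s : ℝ => k (x + s • ee j))
      (pd k j (x + s • ee j)) s := by
    intro s _
    have h1 : HasDerivAt (fun s : ℝ => x + s • ee j) (ee j) s := by
      simpa using ((hasDerivAt_id s).smul_const (ee j)).const_add x
    exact (contDiff_differentiable hk _).hasFDerivAt.comp_hasDerivAt s h1
  have hc : Continuous fun s : ℝ => pd k j (x + s • ee j) :=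
    (contDiff_pd hk j).continuous.comp (by fun_prop)
  simp only [ContinuousLinearMap.id_apply]
  rw [intervalIntegral.integral_eq_sub_of_hasDerivAt hd (hc.intervalIntegrable _ _)]
  have : k (x + (-(32 / 5) : ℝ) • ee j) = 0 := by
    refine hs _ j ?_
    simp only [PiLp.add_apply, PiLp.smul_apply, ee_apply, if_true, smul_eq_mul, mul_one]
    rw [abs_of_neg (by linarith)]
    linarith
  rw [this]
  simp

theorem truncPrimitive_eq_zero {f : E3 → ℝ} (hf : ContDiff ℝ ∞ f) (hs : CubeSupported f)
    (j : Fin 3) {x : E3} (hx : 8 / 5 < |x j|) : truncPrimitive j f x = 0 := by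
  rw [truncPrimitive]
  rcases lt_or_ge (|x j|) (16 / 5) with h | h
  · rw [primitive_eq_zero ((tame_spread j).id_sub.smooth f hf) (hs.sub (hs.spread j)) j
      (chordInt_sub_spread hf j) hx ((le_abs_self _).trans_lt h), mul_zero]
  · rw [coordCutoff_eq_zero h, zero_mul]

theorem CubeSupported.truncPrimitive {f : E3 → ℝ} (hf : ContDiff ℝ ∞ f) (hs : CubeSupported f)
    (j : Fin 3) : CubeSupported (truncPrimitive j f) := by
  intro x i hx
  by_cases hij : i = j
  · subst hij
    exact truncPrimitive_eq_zero hf hs i hx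
  · rw [_root_.truncPrimitive, lineInt_eq_zero_of_cubeSupported (hs.sub (hs.spread j)) hij (by simp)
      hx, mul_zero]

theorem pd_truncPrimitive {f : E3 → ℝ} (hf : ContDiff ℝ ∞ f) (hs : CubeSupported f)
    (j : Fin 3) (x : E3) : pd (truncPrimitive j f) j x = f x - spread j f x := by
  have hc : Continuous fun y : E3 => |y j| := by fun_prop
  rcases lt_or_ge (|x j|) (12 / 5) with h | h
  · rw [pd_congr_on (s := {y : E3 | |y j| < 12 / 5}) (isOpen_lt hc continuous_const)
      (g := lineInt (ContinuousLinearMap.id ℝ E3) (ee j) (-(32 / 5)) 0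
        (fun y => f y - spread j f y)) (fun y hy => ?_) j x h]
    · exact pd_primitive ((tame_spread j).id_sub.smooth f hf) (hs.sub (hs.spread j)) j
        (by linarith [le_abs_self (x j)])
    · rw [truncPrimitive, coordCutoff_eq_one (le_of_lt hy), one_mul]
  · have hx : 8 / 5 < |x j| := by linarith
    rw [pd_congr_on (s := {y : E3 | 8 / 5 < |y j|}) (isOpen_lt continuous_const hc)
      (g := fun _ => 0) (fun y hy => truncPrimitive_eq_zero hf hs j hy) j x hx, pd_const,
      hs x j hx, hs.spread j x j hx, sub_zero]

theorem exists_spread_eq (g : E3 → ℝ) : ∃ c : ℝ, ∀ x,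
    spread 2 (spread 1 (spread 0 g)) x = unitMass (x 0) * unitMass (x 1) * unitMass (x 2) * c := by
  refine ⟨∫ s in Set.Icc (-(8 / 5) : ℝ) (8 / 5), ∫ t in Set.Icc (-(8 / 5) : ℝ) (8 / 5),
    chordInt 0 g (t • ee 1 + s • ee 2), fun x => ?_⟩
  have h1 : ∀ y, chordInt 0 g y = chordInt 0 g (killCoord 0 y) := fun y => by
    have : killCoord 0 (killCoord 0 y) = killCoord 0 y := by
      simpa using killCoord_killCoord_add_smul 0 y 0
    simp only [chordInt, lineInt, this]
  have h2 : ∀ s t : ℝ, spread 0 g (killCoord 1 (killCoord 2 x + s • ee 2) + t • ee 1)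
      = unitMass (x 0) * chordInt 0 g (t • ee 1 + s • ee 2) := by
    intro s t
    rw [spread, h1]
    congr 2
    · simp [killCoord_apply, ee_apply]
    · ext k
      fin_cases k <;> simp [killCoord_apply, ee_apply]
  have h3 : ∀ s : ℝ, spread 1 (spread 0 g) (killCoord 2 x + s • ee 2)
      = unitMass (x 0) * unitMass (x 1) * ∫ t in Set.Icc (-(8 / 5) : ℝ) (8 / 5),
        chordInt 0 g (t • ee 1 + s • ee 2) := by
    intro s
    rw [spread, chordInt, lineInt]
    simp only [h2]
    rw [integral_const_mul]
    simp [killCoord_apply, ee_apply]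
    ring
  rw [spread, chordInt, lineInt]
  simp only [h3]
  rw [integral_const_mul]
  ring

theorem spread_eq_zero {g : E3 → ℝ} (hg : ContDiff ℝ ∞ g) (hs : CubeSupported g)
    (h0 : ∫ x, g x = 0) (x : E3) : spread 2 (spread 1 (spread 0 g)) x = 0 := by
  have step : ∀ (f : E3 → ℝ), ContDiff ℝ ∞ f → CubeSupported f → ∀ j,
      ∫ x, spread j f x = ∫ x, f x := by
    intro f hf hfs j
    have h1 := integral_pd_eq_zero ((tame_truncPrimitive j).smooth f hf)
      (CubeSupported.truncPrimitive hf hfs j).hasCompactSupport j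
    simp only [pd_truncPrimitive hf hfs] at h1
    rw [integral_sub (hf.continuous.integrable_of_hasCompactSupport hfs.hasCompactSupport)
      (((tame_spread j).smooth f hf).continuous.integrable_of_hasCompactSupport
        (hfs.spread j).hasCompactSupport)] at h1
    linarith
  have s1 := (tame_spread 0).smooth g hg
  have s2 := (tame_spread 1).smooth _ s1
  have hi : ∫ x, spread 2 (spread 1 (spread 0 g)) x = 0 := by
    rw [step _ s2 ((hs.spread 0).spread 1), step _ s1 (hs.spread 0), step _ hg hs, h0]
  obtain ⟨c, hc⟩ := exists_spread_eq g
  simp only [hc] at hi ⊢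
  rw [integral_mul_const] at hi
  have hcont : ContDiff ℝ ∞ fun x : E3 => unitMass (x 0) * unitMass (x 1) * unitMass (x 2) :=
    ((contDiff_unitMass.comp (contDiff_coord 0)).mul
      (contDiff_unitMass.comp (contDiff_coord 1))).mul (contDiff_unitMass.comp (contDiff_coord 2))
  have hcube : CubeSupported fun x : E3 => unitMass (x 0) * unitMass (x 1) * unitMass (x 2) := by
    intro x i hx
    have := unitMass_eq_zero (t := x i) (by linarith)
    fin_cases i <;> simp_all
  have hpos := hcont.continuous.integral_pos_of_hasCompactSupport_nonneg_nonzero (μ := volume)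
    hcube.hasCompactSupport
    (fun x => mul_nonneg (mul_nonneg (unitMass_nonneg _) (unitMass_nonneg _)) (unitMass_nonneg _))
    (x := 0) (by simpa using unitMass_zero_ne)
  rcases mul_eq_zero.1 hi with h | h
  · exact absurd h hpos.ne'
  · rw [h, mul_zero]

theorem exists_divergence_solution : ∃ d : ℕ → ℝ, (∀ k, 0 ≤ d k) ∧
    ∀ g : E3 → ℝ, ContDiff ℝ ∞ g → CubeSupported g → ∫ x, g x = 0 →
    ∃ w : Fin 3 → E3 → ℝ, (∀ j, ContDiff ℝ ∞ (w j)) ∧ (∀ j, CubeSupported (w j)) ∧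
      (∀ x, ∑ j, pd (w j) j x = g x) ∧
      ∀ k b, (∀ m ≤ k, ∀ x, ‖iteratedFDeriv ℝ m g x‖ ≤ b) →
        ∀ j x, ‖iteratedFDeriv ℝ k (w j) x‖ ≤ d k * b := by
  have t1 := tame_truncPrimitive 0
  have t2 := (tame_truncPrimitive 1).comp (tame_spread 0)
  have t3 := (tame_truncPrimitive 2).comp ((tame_spread 1).comp (tame_spread 0))
  choose d1 hd1 hb1 using t1.bound
  choose d2 hd2 hb2 using t2.bound
  choose d3 hd3 hb3 using t3.bound
  refine ⟨fun k => d1 k + d2 k + d3 k, fun k => add_nonneg (add_nonneg (hd1 k) (hd2 k)) (hd3 k),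
    fun g hg hs h0 => ⟨![truncPrimitive 0 g, truncPrimitive 1 (spread 0 g),
      truncPrimitive 2 (spread 1 (spread 0 g))], ?_, ?_, ?_, ?_⟩⟩
  · intro j
    fin_cases j
    exacts [t1.smooth g hg, t2.smooth g hg, t3.smooth g hg]
  · intro j
    fin_cases j
    exacts [CubeSupported.truncPrimitive hg hs 0,
      CubeSupported.truncPrimitive ((tame_spread 0).smooth g hg) (hs.spread 0) 1,
      CubeSupported.truncPrimitive ((tame_spread 1).smooth _ ((tame_spread 0).smooth g hg))
        ((hs.spread 0).spread 1) 2]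
  · intro x
    rw [Fin.sum_univ_three]
    change pd (truncPrimitive 0 g) 0 x + pd (truncPrimitive 1 (spread 0 g)) 1 x
      + pd (truncPrimitive 2 (spread 1 (spread 0 g))) 2 x = g x
    rw [pd_truncPrimitive hg hs, pd_truncPrimitive ((tame_spread 0).smooth g hg) (hs.spread 0),
      pd_truncPrimitive ((tame_spread 1).smooth _ ((tame_spread 0).smooth g hg))
        ((hs.spread 0).spread 1), spread_eq_zero hg hs h0]
    ring
  · intro k b hb j x
    have hb0 : 0 ≤ b := (norm_nonneg _).trans (hb 0 (Nat.zero_le _) 0)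
    have p1 := mul_nonneg (hd1 k) hb0
    have p2 := mul_nonneg (hd2 k) hb0
    have p3 := mul_nonneg (hd3 k) hb0
    have q1 := hb1 k g hg b hb k le_rfl x
    have q2 := hb2 k g hg b hb k le_rfl x
    have q3 := hb3 k g hg b hb k le_rfl x
    rw [add_mul, add_mul]
    fin_cases j
    · exact q1.trans (by linarith)
    · exact q2.trans (by linarith)
    · exact q3.trans (by linarith)

end DivergenceSolver

section Flux

theorem integral_eq_integral_sphInt {F : E3 → ℝ} (hF : Integrable F) :
    ∫ x, F x = ∫ r in Set.Ioi (0 : ℝ), sphInt r F := by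
  set G : sphere (0 : E3) 1 × Set.Ioi (0 : ℝ) → ℝ := fun z => F (z.2.1 • z.1.1) with hG
  have hmp := (volume : Measure E3).measurePreserving_homeomorphUnitSphereProd
  have hemb := Homeomorph.measurableEmbedding (homeomorphUnitSphereProd E3)
  have hGc : ∀ x : ({0}ᶜ : Set E3), G (homeomorphUnitSphereProd E3 x) = F x := by
    intro x
    have h := homeomorphUnitSphereProd_symm_apply_coe E3 (homeomorphUnitSphereProd E3 x)
    rw [Homeomorph.symm_apply_apply] at h
    simp only [hG]
    rw [← h]
  have hcomap : Integrable (fun x : ({0}ᶜ : Set E3) => F x)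
      ((volume : Measure E3).comap Subtype.val) :=
    (integrableOn_iff_comap_subtypeVal (measurableSet_singleton _).compl).1 hF.integrableOn
  have hGi : Integrable G ((volume : Measure E3).toSphere.prod
      (Measure.volumeIoiPow (Module.finrank ℝ E3 - 1))) := by
    rw [← hmp.integrable_comp_emb hemb]
    exact hcomap.congr (Eventually.of_forall fun x => (hGc x).symm)
  calc ∫ x, F x = ∫ x : ({0}ᶜ : Set E3), F x ∂((volume : Measure E3).comap Subtype.val) := by
        rw [integral_subtype_comap (measurableSet_singleton _).compl fun x => F x,
          restrict_compl_singleton]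
    _ = ∫ z, G z ∂((volume : Measure E3).toSphere.prod
          (Measure.volumeIoiPow (Module.finrank ℝ E3 - 1))) := by
        rw [← hmp.integral_comp hemb]
        exact integral_congr_ae (Eventually.of_forall fun x => (hGc x).symm)
    _ = ∫ r : Set.Ioi (0 : ℝ), (∫ ξ, F (r.1 • (ξ : E3)) ∂(volume : Measure E3).toSphere)
          ∂(Measure.volumeIoiPow (Module.finrank ℝ E3 - 1)) := integral_prod_symm G hGi
    _ = _ := by
        simp only [Measure.volumeIoiPow, ENNReal.ofReal]
        rw [integral_withDensity_eq_integral_smul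
            (measurable_subtype_coe.pow_const _).real_toNNReal,
          integral_subtype_comap measurableSet_Ioi fun a : ℝ =>
            Real.toNNReal (a ^ (Module.finrank ℝ E3 - 1)) •
              ∫ ξ, F (a • (ξ : E3)) ∂(volume : Measure E3).toSphere]
        refine setIntegral_congr_fun measurableSet_Ioi fun r hr => ?_
        simp only [NNReal.smul_def, sphInt, finrank_euclideanSpace, Fintype.card_fin]
        rw [Real.coe_toNNReal _ (pow_nonneg (le_of_lt hr) _)]
        rfl

/-- A smooth monotone function vanishing on `(-∞, α]` and equal to one on `[β, ∞)`. -/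
def smoothStep (α β t : ℝ) : ℝ := smoothTransition ((t - α) / (β - α))

variable {α β : ℝ}

theorem contDiff_smoothStep : ContDiff ℝ ∞ (smoothStep α β) :=
  smoothTransition.contDiff.comp ((contDiff_id.sub contDiff_const).div_const _)

theorem smoothStep_eq_zero (h : α < β) {t : ℝ} (ht : t ≤ α) : smoothStep α β t = 0 :=
  smoothTransition.zero_of_nonpos (div_nonpos_of_nonpos_of_nonneg (by linarith) (by linarith))

theorem smoothStep_eq_one (h : α < β) {t : ℝ} (ht : β ≤ t) : smoothStep α β t = 1 :=
  smoothTransition.one_of_one_le ((one_le_div (by linarith)).2 (by linarith))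

theorem monotone_smoothStep (h : α < β) : Monotone (smoothStep α β) := fun _ _ hst =>
  smoothTransition.monotone (div_le_div_of_nonneg_right (by linarith) (by linarith))

theorem deriv_smoothStep_nonneg (h : α < β) (t : ℝ) : 0 ≤ deriv (smoothStep α β) t :=
  (monotone_smoothStep h).deriv_nonneg

theorem deriv_smoothStep_eq_zero_of_le (h : α < β) {t : ℝ} (ht : t ≤ α) :
    deriv (smoothStep α β) t = 0 := by
  have hc : IsClosed {t | deriv (smoothStep α β) t = 0} :=
    isClosed_eq (contDiff_deriv contDiff_smoothStep).continuous continuous_const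
  have hs : Set.Iio α ⊆ {t | deriv (smoothStep α β) t = 0} := fun s hs => by
    have : smoothStep α β =ᶠ[nhds s] fun _ => 0 :=
      eventuallyEq_of_mem (Iio_mem_nhds hs) fun y hy => smoothStep_eq_zero h (le_of_lt hy)
    simp [this.deriv_eq]
  exact closure_minimal hs hc (by rwa [closure_Iio])

theorem deriv_smoothStep_eq_zero_of_ge (h : α < β) {t : ℝ} (ht : β ≤ t) :
    deriv (smoothStep α β) t = 0 := by
  have hc : IsClosed {t | deriv (smoothStep α β) t = 0} :=
    isClosed_eq (contDiff_deriv contDiff_smoothStep).continuous continuous_const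
  have hs : Set.Ioi β ⊆ {t | deriv (smoothStep α β) t = 0} := fun s hs => by
    have : smoothStep α β =ᶠ[nhds s] fun _ => 1 :=
      eventuallyEq_of_mem (Ioi_mem_nhds hs) fun y hy => smoothStep_eq_one h (le_of_lt hy)
    simp [this.deriv_eq]
  exact closure_minimal hs hc (by rwa [closure_Ioi])

/-- A radial cutoff function vanishing for `‖x‖² ≤ α` and equal to one for `β ≤ ‖x‖²`. -/
def radialCut (α β : ℝ) (x : E3) : ℝ := smoothStep α β (‖x‖ ^ 2)

theorem contDiff_radialCut : ContDiff ℝ ∞ (radialCut α β) :=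
  contDiff_smoothStep.comp contDiff_normSq

theorem radialCut_eq_zero (h : α < β) {x : E3} (hx : ‖x‖ ^ 2 ≤ α) : radialCut α β x = 0 :=
  smoothStep_eq_zero h hx

theorem radialCut_eq_one (h : α < β) {x : E3} (hx : β ≤ ‖x‖ ^ 2) : radialCut α β x = 1 :=
  smoothStep_eq_one h hx

theorem pd_radialCut (j : Fin 3) (x : E3) :
    pd (radialCut α β) j x = 2 * x j * deriv (smoothStep α β) (‖x‖ ^ 2) :=
  pd_comp_normSq (hasDerivAt_of_contDiff contDiff_smoothStep _) j

variable {u : Fin 3 → E3 → ℝ}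

/-- The divergence of `radialCut α β • u` where `u` is divergence free. -/
def cutDiv (α β : ℝ) (u : Fin 3 → E3 → ℝ) (x : E3) : ℝ := ∑ j, pd (radialCut α β) j x * u j x

theorem contDiff_cutDiv (hu : ∀ i, ContDiff ℝ ∞ (u i)) : ContDiff ℝ ∞ (cutDiv α β u) :=
  ContDiff.sum fun j _ => (contDiff_pd contDiff_radialCut j).mul (hu j)

theorem cutDiv_eq (x : E3) :
    cutDiv α β u x = 2 * deriv (smoothStep α β) (‖x‖ ^ 2) * ∑ j, u j x * x j := by
  simp only [cutDiv, pd_radialCut, Finset.mul_sum]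
  exact Finset.sum_congr rfl fun j _ => by ring

theorem cutDiv_eq_zero_of_le (h : α < β) {x : E3} (hx : ‖x‖ ^ 2 ≤ α) : cutDiv α β u x = 0 := by
  rw [cutDiv_eq, deriv_smoothStep_eq_zero_of_le h hx, mul_zero, zero_mul]

theorem cutDiv_eq_zero_of_ge (h : α < β) {x : E3} (hx : β ≤ ‖x‖ ^ 2) : cutDiv α β u x = 0 := by
  rw [cutDiv_eq, deriv_smoothStep_eq_zero_of_ge h hx, mul_zero, zero_mul]

theorem integrable_cutDiv (hu : ∀ i, ContDiff ℝ ∞ (u i)) (h : α < β) :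
    Integrable (cutDiv α β u) := by
  refine (contDiff_cutDiv hu).continuous.integrable_of_hasCompactSupport
    (hasCompactSupport_of_vanish (R := |β| + 1) fun y hy => cutDiv_eq_zero_of_ge h ?_)
  nlinarith [le_abs_self β, abs_nonneg β]

theorem integral_cutDiv_eq {a α' β' : ℝ} (hu : ∀ i, ContDiff ℝ ∞ (u i))
    (hdiv : ∀ x, a < ‖x‖ → ∑ j, pd (u j) j x = 0) (h : α < β) (h' : α' < β')
    (hα : a ^ 2 < α) (hα' : a ^ 2 < α') :
    ∫ x, cutDiv α β u x = ∫ x, cutDiv α' β' u x := by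
  set ψ : E3 → ℝ := fun x => radialCut α β x - radialCut α' β' x with hψ
  have hψs : ContDiff ℝ ∞ ψ := contDiff_radialCut.sub contDiff_radialCut
  have hψc : ∀ j, HasCompactSupport fun x => ψ x * u j x := fun j => by
    refine hasCompactSupport_of_vanish (R := |β| + |β'| + 1) fun y hy => ?_
    have hb : |β| + |β'| + 1 ≤ ‖y‖ ^ 2 := by nlinarith [abs_nonneg β, abs_nonneg β']
    simp only [hψ]
    rw [radialCut_eq_one h (by linarith [le_abs_self β, abs_nonneg β']),
      radialCut_eq_one h' (by linarith [le_abs_self β', abs_nonneg β]), sub_self, zero_mul]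
  have key : ∀ x, cutDiv α β u x - cutDiv α' β' u x = ∑ j, pd (fun x => ψ x * u j x) j x := by
    intro x
    have e : ∀ j, pd (fun x => ψ x * u j x) j x = ψ x * pd (u j) j x +
        (pd (radialCut α β) j x - pd (radialCut α' β') j x) * u j x := fun j => by
      rw [pd_mul hψs (hu j), hψ, pd_sub contDiff_radialCut contDiff_radialCut]
    simp only [e, Finset.sum_add_distrib, ← Finset.mul_sum]
    have hz : ψ x * ∑ j, pd (u j) j x = 0 := by
      rcases lt_or_ge a ‖x‖ with hx | hx
      · rw [hdiv x hx, mul_zero]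
      · have : ‖x‖ ^ 2 ≤ a ^ 2 := pow_le_pow_left₀ (norm_nonneg _) hx 2
        simp only [hψ]
        rw [radialCut_eq_zero h (by linarith), radialCut_eq_zero h' (by linarith), sub_self,
          zero_mul]
    rw [hz, zero_add, cutDiv, cutDiv, ← Finset.sum_sub_distrib]
    exact Finset.sum_congr rfl fun j _ => by ring
  have hi : ∫ x, (cutDiv α β u x - cutDiv α' β' u x) = 0 := by
    simp only [key]
    rw [integral_finsetSum]
    · exact Finset.sum_eq_zero fun j _ => integral_pd_eq_zero (hψs.mul (hu j)) (hψc j) j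
    · exact fun j _ => (contDiff_pd (hψs.mul (hu j)) j).continuous.integrable_of_hasCompactSupport
        (hasCompactSupport_pd (hψc j) j)
  rw [integral_sub (integrable_cutDiv hu h) (integrable_cutDiv hu h')] at hi
  linarith

/-- The flux density through the spheres centered at the origin. -/
def radialFlux (u : Fin 3 → E3 → ℝ) (r : ℝ) : ℝ :=
  r ^ 2 * ∫ ξ : sphere (0 : E3) 1, ∑ j, u j (r • (ξ : E3)) * (ξ : E3) j
    ∂(volume : Measure E3).toSphere

theorem continuous_radialFlux (hu : ∀ i, ContDiff ℝ ∞ (u i)) : Continuous (radialFlux u) := by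
  refine (continuous_pow 2).mul ?_
  have hf : Continuous (Function.uncurry fun (r : ℝ) (ξ : sphere (0 : E3) 1) =>
      ∑ j, u j (r • (ξ : E3)) * (ξ : E3) j) := by
    refine continuous_finsetSum _ fun j _ => ?_
    have := (hu j).continuous
    dsimp only
    fun_prop
  simpa using continuous_parametric_integral_of_continuous
    (μ := (volume : Measure E3).toSphere) hf isCompact_univ

theorem sphInt_cutDiv (r : ℝ) :
    sphInt r (cutDiv α β u) = deriv (smoothStep α β) (r ^ 2) * (2 * r) * radialFlux u r := by
  have h : ∀ ξ : sphere (0 : E3) 1, cutDiv α β u (r • (ξ : E3))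
      = deriv (smoothStep α β) (r ^ 2) * (2 * r) * ∑ j, u j (r • (ξ : E3)) * (ξ : E3) j := by
    intro ξ
    have hξ : ‖(ξ : E3)‖ = 1 := by simp
    rw [cutDiv_eq, norm_smul, hξ, mul_one, Real.norm_eq_abs, sq_abs, Finset.mul_sum,
      Finset.mul_sum]
    refine Finset.sum_congr rfl fun j _ => ?_
    rw [PiLp.smul_apply, smul_eq_mul]
    ring
  simp only [sphInt, radialFlux, h]
  rw [integral_const_mul]
  ring

theorem radialFlux_eq_sphInt {r : ℝ} (hr : 0 < r) :
    radialFlux u r = sphInt r (fun x => ∑ j, u j x * (x j / ‖x‖)) := by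
  rw [radialFlux, sphInt]
  congr 1
  refine integral_congr_ae (Eventually.of_forall fun ξ => Finset.sum_congr rfl fun j _ => ?_)
  have hξ : ‖(ξ : E3)‖ = 1 := by simp
  simp only [norm_smul, hξ, PiLp.smul_apply, smul_eq_mul, Real.norm_eq_abs, abs_of_pos hr]
  field_simp

theorem abs_integral_cutDiv_le {r s δ : ℝ} (hr : 0 < r) (hrs : r < s)
    (hu : ∀ i, ContDiff ℝ ∞ (u i)) (hδ : ∀ t ∈ Set.Icc r s, |radialFlux u t| ≤ δ) :
    |∫ x, cutDiv (r ^ 2) (s ^ 2) u x| ≤ δ := by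
  have hsq : r ^ 2 < s ^ 2 := pow_lt_pow_left₀ hrs hr.le (by norm_num)
  set θ := smoothStep (r ^ 2) (s ^ 2) with hθ
  have hθs : ContDiff ℝ ∞ θ := contDiff_smoothStep
  have e1 : ∫ x, cutDiv (r ^ 2) (s ^ 2) u x
      = ∫ t in r..s, deriv θ (t ^ 2) * (2 * t) * radialFlux u t := by
    rw [integral_eq_integral_sphInt (integrable_cutDiv hu hsq),
      intervalIntegral.integral_of_le hrs.le,
      setIntegral_congr_fun measurableSet_Ioi fun t _ => sphInt_cutDiv t]
    refine (setIntegral_eq_of_subset_of_forall_sdiff_eq_zero measurableSet_Ioi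
      (fun t ht => hr.trans ht.1) fun t ht => ?_)
    have ht0 : 0 < t := ht.1
    have hz : deriv (smoothStep (r ^ 2) (s ^ 2)) (t ^ 2) = 0 := by
      rcases le_or_gt t r with h | h
      · exact deriv_smoothStep_eq_zero_of_le hsq (pow_le_pow_left₀ ht0.le h 2)
      · refine deriv_smoothStep_eq_zero_of_ge hsq (pow_le_pow_left₀ (hr.trans hrs).le ?_ 2)
        by_contra! hts
        exact ht.2 ⟨h, hts.le⟩
    rw [hz]
    ring
  have hc : Continuous fun t : ℝ => deriv θ (t ^ 2) * (2 * t) :=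
    ((contDiff_deriv hθs).continuous.comp (continuous_pow 2)).mul (by fun_prop)
  have e2 : ∫ t in r..s, deriv θ (t ^ 2) * (2 * t) = 1 := by
    have hd : ∀ t ∈ Set.uIcc r s, HasDerivAt (fun t => θ (t ^ 2)) (deriv θ (t ^ 2) * (2 * t)) t :=
      fun t _ => by
        have := (hasDerivAt_of_contDiff hθs (t ^ 2)).comp t (hasDerivAt_pow 2 t)
        simpa [Function.comp_def] using this
    rw [intervalIntegral.integral_eq_sub_of_hasDerivAt hd (hc.intervalIntegrable _ _), hθ,
      smoothStep_eq_one hsq le_rfl, smoothStep_eq_zero hsq le_rfl, sub_zero]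
  rw [e1, ← Real.norm_eq_abs]
  calc _ ≤ ∫ t in r..s, deriv θ (t ^ 2) * (2 * t) * δ := by
        refine intervalIntegral.norm_integral_le_of_norm_le hrs.le
          (Eventually.of_forall fun t ht => ?_) ((hc.mul continuous_const).intervalIntegrable _ _)
        have h0 : 0 ≤ deriv θ (t ^ 2) * (2 * t) :=
          mul_nonneg (deriv_smoothStep_nonneg hsq _) (by linarith [ht.1])
        rw [norm_mul, Real.norm_of_nonneg h0]
        exact mul_le_mul_of_nonneg_left (hδ t ⟨ht.1.le, ht.2⟩) h0
    _ = δ := by rw [intervalIntegral.integral_mul_const, e2, one_mul]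

theorem integral_cutDiv_eq_zero {a R : ℝ} (ha : 0 ≤ a) (hu : ∀ i, ContDiff ℝ ∞ (u i))
    (hdiv : ∀ x, a < ‖x‖ → ∑ j, pd (u j) j x = 0) (haR : a < R) (hR : radialFlux u R = 0)
    (h : α < β) (hα : a ^ 2 < α) : ∫ x, cutDiv α β u x = 0 := by
  rw [← abs_nonpos_iff]
  refine le_of_forall_pos_le_add fun δ hδ => ?_
  rw [zero_add]
  have hcont := (continuous_radialFlux hu).continuousAt (x := R)
  rw [Metric.continuousAt_iff] at hcont
  obtain ⟨ε, hε, hball⟩ := hcont δ hδ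
  have hR0 : 0 < R := ha.trans_lt haR
  rw [integral_cutDiv_eq hu hdiv h
    (pow_lt_pow_left₀ (by linarith : R < R + ε / 2) hR0.le two_ne_zero) hα
    (pow_lt_pow_left₀ haR ha two_ne_zero)]
  refine abs_integral_cutDiv_le hR0 (by linarith) hu fun t ht => ?_
  have := hball (x := t) (by rw [Real.dist_eq, abs_of_nonneg] <;> linarith [ht.1, ht.2])
  rw [hR, Real.dist_eq, sub_zero] at this
  exact this.le

end Flux

section UnitExtension

theorem norm_iteratedFDeriv_eq_zero_of_forall {f : E3 → ℝ} {s : Set E3} (hs : IsOpen s)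
    (h : ∀ x ∈ s, f x = 0) (k : ℕ) {x : E3} (hx : x ∈ s) : ‖iteratedFDeriv ℝ k f x‖ = 0 := by
  rw [iteratedFDeriv_congr_on hs (g := fun _ => 0) h k x hx, iteratedFDeriv_fun_zero]
  simp

theorem isOpen_lt_norm (a : ℝ) : IsOpen {x : E3 | a < ‖x‖} :=
  isOpen_lt continuous_const continuous_norm

theorem Dec.of_vanish {f : E3 → ℝ} {b : ℕ → ℝ} {C : ℝ} (hC : 0 ≤ C) (hb0 : ∀ k, 0 ≤ b k)
    (h0 : ∀ x, 3 < ‖x‖ → f x = 0) (hb : ∀ k x, ‖iteratedFDeriv ℝ k f x‖ ≤ b k * C) (m : ℕ) :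
    Dec Set.univ 1 C (fun k => b k * 4 ^ (k + m)) m f := by
  intro k x _
  have hbk := mul_nonneg (hb0 k) hC
  rcases lt_or_ge 3 ‖x‖ with hx | hx
  · rw [norm_iteratedFDeriv_eq_zero_of_forall (isOpen_lt_norm 3) h0 k hx]
    have := hb0 k
    positivity
  · refine (hb k x).trans ?_
    change b k * C ≤ b k * 4 ^ (k + m) * C / (1 + ‖x‖) ^ (k + m)
    have h4 : (1 + ‖x‖) ^ (k + m) ≤ 4 ^ (k + m) := pow_le_pow_left₀ (by positivity) (by linarith) _
    rw [le_div_iff₀ (by positivity)]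
    linarith [mul_le_mul_of_nonneg_left h4 hbk]

theorem Dec.extend {f : E3 → ℝ} {c : ℕ → ℝ} {C a b : ℝ} {m : ℕ} (hC : 0 ≤ C) (hc : ∀ k, 0 ≤ c k)
    (hab : a < b) (h : Dec {x | a < ‖x‖} 1 C c m f) (h0 : ∀ x, ‖x‖ < b → f x = 0) :
    Dec Set.univ 1 C c m f := by
  intro k x _
  rcases lt_or_ge a ‖x‖ with hx | hx
  · exact h k x hx
  · rw [norm_iteratedFDeriv_eq_zero_of_forall (s := {x : E3 | ‖x‖ < b})
      (isOpen_lt continuous_norm continuous_const) h0 k (hx.trans_lt hab)]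
    have := hc k
    positivity

theorem Dec.one : Dec Set.univ 1 1 (fun _ => 1) 0 fun _ => 1 := by
  rintro (_ | k) x _
  · simp
  · rw [iteratedFDeriv_succ_const]
    simp only [Pi.zero_apply, norm_zero]
    positivity

theorem exists_dec_radialCut {α β : ℝ} (h : α < β) (hβ : β ≤ 9) :
    ∃ c : ℕ → ℝ, (∀ k, 0 ≤ c k) ∧ Dec Set.univ 1 1 c 0 (radialCut α β) := by
  have hs : ContDiff ℝ ∞ fun x => radialCut α β x - 1 := contDiff_radialCut.sub contDiff_const
  have h0 : ∀ x : E3, 3 < ‖x‖ → radialCut α β x - 1 = 0 := fun x hx => by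
    rw [radialCut_eq_one h (by nlinarith), sub_self]
  have hb : ∀ k, ∃ B, ∀ x, ‖iteratedFDeriv ℝ k (fun x => radialCut α β x - 1) x‖ ≤ B := fun k =>
    ((hasCompactSupport_of_vanish h0).iteratedFDeriv (𝕜 := ℝ) k).exists_bound_of_continuous
      (hs.continuous_iteratedFDeriv (m := k) (mod_cast le_top))
  choose B hB using hb
  have hB0 : ∀ k, 0 ≤ B k := fun k => (norm_nonneg _).trans (hB k 0)
  have h1 := Dec.of_vanish zero_le_one hB0 h0 (fun k x => by simpa using hB k x) 0
  have h2 := h1.add hs contDiff_const Dec.one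
  refine ⟨_, fun k => ?_, h2.congr_on isOpen_univ fun x _ => by ring⟩
  have := hB0 k
  positivity

theorem exists_extension_unit {M : ℝ} (hM : 0 ≤ M) : ∃ c : ℕ → ℝ, (∀ k, 0 ≤ c k) ∧
    ∀ (u : Fin 3 → E3 → ℝ) (p : E3 → ℝ), (∀ i, ContDiff ℝ ∞ (u i)) → ContDiff ℝ ∞ p →
    ∀ a R C : ℝ, 0 ≤ a → a ≤ 11 / 10 → a < R → 0 ≤ C → C ≤ M → NSOn {x | a < ‖x‖} u p →
    (∀ x, a < ‖x‖ → ∀ i, |u i x| ≤ C / (1 + ‖x‖)) → radialFlux u R = 0 →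
    ∃ (v : Fin 3 → E3 → ℝ) (q : E3 → ℝ) (p₀ : ℝ), (∀ i, ContDiff ℝ ∞ (v i)) ∧ ContDiff ℝ ∞ q ∧
      (∀ x, 3 ≤ ‖x‖ → (∀ i, v i x = u i x) ∧ q x = p x - p₀) ∧
      (∀ x, ∑ j, pd (v j) j x = 0) ∧
      (∀ i, Dec Set.univ 1 C c 1 (v i)) ∧ Dec Set.univ 1 C c 2 q := by
  obtain ⟨c, hc0, hc⟩ := exists_solution_decay hM
  obtain ⟨d, hd0, hd⟩ := exists_divergence_solution
  have hαβ : (36 / 25 : ℝ) < 61 / 25 := by norm_num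
  obtain ⟨e, he0, he⟩ := exists_dec_radialCut hαβ (by norm_num)
  set η : E3 → ℝ := radialCut (36 / 25) (61 / 25) with hη
  have hηs : ContDiff ℝ ∞ η := contDiff_radialCut
  set l : ℕ → ℝ := leibnizConst e c with hl
  have hl0 : ∀ k, 0 ≤ l k := leibnizConst_nonneg he0 hc0
  set gc : ℕ → ℝ := fun k => 3 * leibnizConst (fun k => e (k + 1)) c k with hgc
  have hgc0 : ∀ k, 0 ≤ gc k := fun k =>
    mul_nonneg (by norm_num) (leibnizConst_nonneg (fun k => he0 (k + 1)) hc0 k)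
  set b : ℕ → ℝ := fun k => d k * ∑ m ∈ Finset.range (k + 1), gc m with hb
  have hb0 : ∀ k, 0 ≤ b k := fun k => mul_nonneg (hd0 k) (Finset.sum_nonneg fun m _ => hgc0 m)
  refine ⟨fun k => l k + b k * 4 ^ (k + 1), fun k => ?_, ?_⟩
  · have := hl0 k
    have := hb0 k
    positivity
  intro u p hu hp a R C ha0 ha haR hC0 hCM hns hub hflux
  have hsub : {x : E3 | 11 / 10 < ‖x‖} ⊆ {x | a < ‖x‖} := fun x hx => lt_of_le_of_lt ha hx
  obtain ⟨hdu, p₀, hdp⟩ := hc u p hu hp C hCM (hns.mono hsub) fun x hx => hub x (hsub hx)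
  have hη0 : ∀ x : E3, ‖x‖ < 6 / 5 → η x = 0 := fun x hx =>
    radialCut_eq_zero hαβ (by nlinarith [norm_nonneg x])
  have hη1 : ∀ x : E3, 3 ≤ ‖x‖ → η x = 1 := fun x hx => radialCut_eq_one hαβ (by nlinarith)
  have hlt : (23 / 20 : ℝ) < 6 / 5 := by norm_num
  set g : E3 → ℝ := cutDiv (36 / 25) (61 / 25) u with hg
  have hgs : ContDiff ℝ ∞ g := contDiff_cutDiv hu
  have hgcube : CubeSupported g := fun x i hx => by
    refine cutDiv_eq_zero_of_ge hαβ ?_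
    have h1 : |x i| ≤ ‖x‖ := PiLp.norm_apply_le x i
    nlinarith [abs_nonneg (x i)]
  have hgint : ∫ x, g x = 0 := integral_cutDiv_eq_zero ha0 hu hns.2 haR hflux hαβ (by nlinarith)
  have hgdec : Dec Set.univ 1 C gc 2 g := by
    refine Dec.extend hC0 hgc0 hlt ?_ fun x hx =>
      cutDiv_eq_zero_of_le hαβ (by nlinarith [norm_nonneg x])
    have h1 := Dec.sum (fun j => (contDiff_pd hηs j).mul (hu j)) fun j =>
      ((he.partial_deriv hηs j).mono (Set.subset_univ _)).mul one_pos (contDiff_pd hηs j) (hu j)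
        (hdu j)
    rwa [one_mul] at h1
  have hgb : ∀ k, ∀ m ≤ k, ∀ x, ‖iteratedFDeriv ℝ m g x‖
      ≤ (∑ m ∈ Finset.range (k + 1), gc m) * C := fun k m hm x => by
    have h1 : (1 : ℝ) ≤ (1 + ‖x‖) ^ (m + 2) := one_le_pow₀ (by linarith [norm_nonneg x])
    refine (hgdec m x trivial).trans ((div_le_self (mul_nonneg (hgc0 m) hC0) h1).trans ?_)
    exact mul_le_mul_of_nonneg_right (Finset.single_le_sum (fun i _ => hgc0 i)
      (Finset.mem_range.2 (Nat.lt_succ_of_le hm))) hC0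
  obtain ⟨w, hws, hwcube, hwdiv, hwb⟩ := hd g hgs hgcube hgint
  have hw0 : ∀ i x, 14 / 5 < ‖x‖ → w i x = 0 := fun i x hx => (hwcube i).eq_zero_of_norm hx
  have hwdec : ∀ i, Dec Set.univ 1 C (fun k => b k * 4 ^ (k + 1)) 1 (w i) := fun i =>
    Dec.of_vanish hC0 hb0 (fun x hx => hw0 i x (by linarith)) (fun k x => by
      rw [hb, mul_assoc]
      exact hwb k _ (hgb k) i x) 1
  have hcut : ∀ (f : E3 → ℝ) (m : ℕ), ContDiff ℝ ∞ f → Dec {x | 23 / 20 < ‖x‖} 1 C c m f →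
      Dec Set.univ 1 C l m fun x => η x * f x := fun f m hf hdf => by
    refine Dec.extend hC0 hl0 hlt ?_ fun x hx => by rw [hη0 x hx, zero_mul]
    have h1 := (he.mono (Set.subset_univ _)).mul one_pos hηs hf hdf
    rwa [one_mul, zero_add] at h1
  refine ⟨fun i x => η x * u i x + -w i x, fun x => η x * (p x - p₀), p₀,
    fun i => (hηs.mul (hu i)).add (hws i).neg, hηs.mul (hp.sub contDiff_const), ?_, ?_, ?_, ?_⟩
  · intro x hx
    simp only [hη1 x hx, hw0 _ x (by linarith), one_mul, neg_zero, add_zero, implies_true,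
      and_self]
  · intro x
    have h1 : ∀ j, pd (fun x => η x * u j x + -w j x) j x
        = η x * pd (u j) j x + pd η j x * u j x - pd (w j) j x := fun j => by
      rw [pd_add (hηs.mul (hu j)) (hws j).neg, pd_mul hηs (hu j), pd_neg, sub_eq_add_neg]
    have h2 : η x * ∑ j, pd (u j) j x = 0 := by
      rcases lt_or_ge a ‖x‖ with hx | hx
      · rw [hns.2 x hx, mul_zero]
      · rw [hη0 x (by linarith), zero_mul]
    simp only [h1, Finset.sum_sub_distrib, Finset.sum_add_distrib, ← Finset.mul_sum, h2, hwdiv]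
    rw [zero_add, hg, cutDiv, sub_self]
  · exact fun i => (hcut _ 1 (hu i) (hdu i)).add (hηs.mul (hu i)) (hws i).neg (hwdec i).neg
  · refine (hcut _ 2 (hp.sub contDiff_const) hdp).mono_const one_pos fun k =>
      mul_le_mul_of_nonneg_right (le_add_of_nonneg_right ?_) hC0
    have := hb0 k
    positivity

end UnitExtension

section GeneralRadius

theorem NSOn.congr_on {s : Set E3} (hs : IsOpen s) {u v : Fin 3 → E3 → ℝ} {p q : E3 → ℝ}
    (h : NSOn s u p) (huv : ∀ i, ∀ x ∈ s, v i x = u i x) (hpq : ∀ x ∈ s, q x = p x) :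
    NSOn s v q := by
  have h1 : ∀ i j, ∀ x ∈ s, pd (v i) j x = pd (u i) j x := fun i j => pd_congr_on hs (huv i) j
  have h2 : ∀ i j, ∀ x ∈ s, pd (pd (v i) j) j x = pd (pd (u i) j) j x := fun i j =>
    pd_congr_on hs (h1 i j) j
  refine ⟨fun x hx i => ?_, fun x hx => ?_⟩
  · have := h.1 x hx i
    simp only [lap] at this ⊢
    simpa only [h1 _ _ x hx, h2 _ _ x hx, huv _ x hx, pd_congr_on hs hpq i x hx] using this
  · simpa only [h1 _ _ x hx] using h.2 x hx

theorem IsNS.nsOn {s : Set E3} {u : E3 → E3} {p : E3 → ℝ} (h : IsNS s u p) :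
    NSOn s (fun i x => u x i) p := h

theorem contDiff_radialCut_mul {α β : ℝ} (h : α < β) (hα : 1 < α) {f : E3 → ℝ}
    (hf : ContDiffOn ℝ ∞ f {x | 1 < ‖x‖}) : ContDiff ℝ ∞ fun x => radialCut α β x * f x := by
  rw [contDiff_iff_contDiffAt]
  intro x
  rcases lt_or_ge 1 ‖x‖ with hx | hx
  · exact contDiff_radialCut.contDiffAt.mul (hf.contDiffAt ((isOpen_lt_norm 1).mem_nhds hx))
  · have hx' : ‖x‖ ^ 2 < α := by nlinarith [norm_nonneg x]
    have hopen : IsOpen {x : E3 | ‖x‖ ^ 2 < α} := isOpen_lt (by fun_prop) continuous_const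
    refine (contDiffAt_const (c := (0 : ℝ))).congr_of_eventuallyEq
      (eventuallyEq_of_mem (hopen.mem_nhds hx') fun y hy => ?_)
    rw [radialCut_eq_zero h (le_of_lt hy), zero_mul]

theorem Dec.scale {f : E3 → ℝ} {c : ℕ → ℝ} {C R : ℝ} {m : ℕ} (hR : 0 < R) (hf : ContDiff ℝ ∞ f)
    (h : Dec Set.univ 1 C c m f) :
    Dec Set.univ R C c m fun x => R⁻¹ ^ m * f (R⁻¹ • x) := by
  intro k x _
  rw [norm_iteratedFDeriv_const_mul_comp_smul hf, abs_pow, ← pow_add, abs_of_pos (by positivity)]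
  refine (mul_le_mul_of_nonneg_left (h k _ trivial) (by positivity)).trans (le_of_eq ?_)
  rw [norm_smul, Real.norm_eq_abs, abs_of_pos (by positivity),
    show R + ‖x‖ = R * (1 + R⁻¹ * ‖x‖) by field_simp, mul_pow, inv_pow, add_comm m k]
  have : 0 < 1 + R⁻¹ * ‖x‖ := by positivity
  field_simp

theorem norm_iteratedFDeriv_le_sum_coord {f : E3 → E3} (hf : ∀ i, ContDiff ℝ ∞ fun x => f x i)
    (k : ℕ) (x : E3) :
    ‖iteratedFDeriv ℝ k f x‖ ≤ ∑ i, ‖iteratedFDeriv ℝ k (fun x => f x i) x‖ := by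
  have e : f = fun x => ∑ i, (ContinuousLinearMap.toSpanSingleton ℝ (ee i) ∘ fun x => f x i) x := by
    ext1 x
    simpa using eq_sum_ee (f x)
  conv_lhs => rw [e]
  rw [iteratedFDeriv_fun_sum_apply fun i _ =>
    (((ContinuousLinearMap.contDiff _).comp (hf i)).of_le (mod_cast le_top)).contDiffAt]
  refine (norm_sum_le _ _).trans (Finset.sum_le_sum fun i _ => ?_)
  refine (ContinuousLinearMap.norm_iteratedFDeriv_comp_left _ (hf i).contDiffAt
    (mod_cast le_top)).trans (le_of_eq ?_)
  rw [ContinuousLinearMap.norm_toSpanSingleton, norm_ee, one_mul]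

theorem norm_iteratedFDeriv_le_of_dec {f : E3 → E3} {R C : ℝ} {c : ℕ → ℝ} {m : ℕ}
    (hf : ∀ i, ContDiff ℝ ∞ fun x => f x i) (h : ∀ i, Dec Set.univ R C c m fun x => f x i)
    (k : ℕ) (x : E3) : ‖iteratedFDeriv ℝ k f x‖ ≤ 3 * c k * C / (R + ‖x‖) ^ (k + m) := by
  refine (norm_iteratedFDeriv_le_sum_coord hf k x).trans
    ((Finset.sum_le_sum fun i _ => h i k x trivial).trans (le_of_eq ?_))
  simp
  ring

theorem pd_sub_const (f : E3 → ℝ) (a : ℝ) (j : Fin 3) : pd (fun x => f x - a) j = pd f j := by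
  ext x
  rw [pd, pd, fderiv_sub_const]

/-- The residual of the momentum equation. -/
def nsForce (u : Fin 3 → E3 → ℝ) (p : E3 → ℝ) (i : Fin 3) (x : E3) : ℝ :=
  -lap (u i) x + (∑ j, u j x * pd (u i) j x) + pd p i x

theorem contDiff_nsForce {u : Fin 3 → E3 → ℝ} {p : E3 → ℝ} (hu : ∀ i, ContDiff ℝ ∞ (u i))
    (hp : ContDiff ℝ ∞ p) (i : Fin 3) : ContDiff ℝ ∞ (nsForce u p i) :=
  ((contDiff_lap (hu i)).neg.add (ContDiff.sum fun j _ => (hu j).mul (contDiff_pd (hu i) j))).add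
    (contDiff_pd hp i)

theorem Dec.nsForce {u : Fin 3 → E3 → ℝ} {p : E3 → ℝ} {R C M : ℝ} {c : ℕ → ℝ}
    (hR : 0 < R) (hC : 0 ≤ C) (hCM : C ≤ M) (hc : ∀ k, 0 ≤ c k) (hu : ∀ i, ContDiff ℝ ∞ (u i))
    (hp : ContDiff ℝ ∞ p) (hdu : ∀ i, Dec Set.univ R C c 1 (u i)) (hdp : Dec Set.univ R C c 2 p)
    (i : Fin 3) : Dec Set.univ R C
      (fun k => 3 * c (k + 2) + M * (3 * leibnizConst c (fun k => c (k + 1)) k) + c (k + 1)) 3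
      (nsForce u p i) := by
  have h1 := (Dec.sum (fun j => contDiff_pd (contDiff_pd (hu i) j) j) fun j =>
    ((hdu i).partial_deriv (hu i) j).partial_deriv (contDiff_pd (hu i) j) j).neg
  have h2 := Dec.sum (fun j => (hu j).mul (contDiff_pd (hu i) j)) fun j =>
    (hdu j).mul hR (hu j) (contDiff_pd (hu i) j) ((hdu i).partial_deriv (hu i) j)
  have h3 := h2.mono_const (C' := C)
    (d := fun k => M * (3 * leibnizConst c (fun k => c (k + 1)) k)) hR fun k => by
      have := mul_le_mul_of_nonneg_left (mul_le_mul_of_nonneg_right hCM hC)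
        (mul_nonneg (by norm_num : (0 : ℝ) ≤ 3)
          (leibnizConst_nonneg hc (fun k => hc (k + 1)) k))
      linarith
  have hs := ContDiff.sum (s := Finset.univ) fun j _ => (hu j).mul (contDiff_pd (hu i) j)
  exact (h1.add (contDiff_lap (hu i)).neg hs h3).add ((contDiff_lap (hu i)).neg.add hs)
    (contDiff_pd hp i) (hdp.partial_deriv hp i)

theorem nsForce_eq_zero {s : Set E3} (hs : IsOpen s) {u v : Fin 3 → E3 → ℝ} {p q : E3 → ℝ}
    {p₀ : ℝ} (h : NSOn s u p) (huv : ∀ i, ∀ x ∈ s, v i x = u i x)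
    (hpq : ∀ x ∈ s, q x = p x - p₀) {x : E3} (hx : x ∈ s) (i : Fin 3) : nsForce v q i x = 0 := by
  have h' : NSOn s u fun x => p x - p₀ := by
    refine ⟨fun x hx i => ?_, h.2⟩
    rw [pd_sub_const]
    exact h.1 x hx i
  exact (h'.congr_on hs huv hpq).1 x hx i

theorem exists_extension {M : ℝ} (hM : 0 ≤ M) : ∃ c : ℕ → ℝ, (∀ k, 0 ≤ c k) ∧
    ∀ (u : Fin 3 → E3 → ℝ) (p : E3 → ℝ) (R C R₁ : ℝ), 0 < R →
    (∀ i, ContDiffOn ℝ ∞ (u i) {x | R < ‖x‖}) → ContDiffOn ℝ ∞ p {x | R < ‖x‖} →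
    0 ≤ C → C ≤ M → NSOn {x | R < ‖x‖} u p →
    (∀ x, R < ‖x‖ → ∀ i, |u i x| ≤ C / (R + ‖x‖)) → R < R₁ →
    sphInt R₁ (fun x => ∑ j, u j x * (x j / ‖x‖)) = 0 →
    ∃ (v : Fin 3 → E3 → ℝ) (q : E3 → ℝ) (p₀ : ℝ), (∀ i, ContDiff ℝ ∞ (v i)) ∧ ContDiff ℝ ∞ q ∧
      (∀ x, 3 * R ≤ ‖x‖ → (∀ i, v i x = u i x) ∧ q x = p x - p₀) ∧
      (∀ x, ∑ j, pd (v j) j x = 0) ∧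
      (∀ i, Dec Set.univ R C c 1 (v i)) ∧ Dec Set.univ R C c 2 q := by
  obtain ⟨c, hc0, hc⟩ := exists_extension_unit hM
  refine ⟨c, hc0, fun u p R C R₁ hR hu hp hC hCM hns hub hR₁ hflux => ?_⟩
  have hmem : ∀ y : E3, 1 < ‖y‖ → R < ‖R • y‖ := fun y hy => by
    rw [norm_smul, Real.norm_eq_abs, abs_of_pos hR]
    nlinarith
  set U : Fin 3 → E3 → ℝ := fun i y => R * u i (R • y) with hU
  set P : E3 → ℝ := fun y => R ^ 2 * p (R • y) with hP
  have hsmul : ContDiffOn ℝ ∞ (fun y : E3 => R • y) {y | 1 < ‖y‖} :=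
    (contDiff_const_smul R).contDiffOn
  have hUs : ∀ i, ContDiffOn ℝ ∞ (U i) {y | 1 < ‖y‖} := fun i =>
    contDiffOn_const.mul ((hu i).comp hsmul hmem)
  have hPs : ContDiffOn ℝ ∞ P {y | 1 < ‖y‖} := contDiffOn_const.mul (hp.comp hsmul hmem)
  have hUns : NSOn {y | 1 < ‖y‖} U P := (hns.scale R).mono hmem
  have hUb : ∀ y, 1 < ‖y‖ → ∀ i, |U i y| ≤ C / (1 + ‖y‖) := fun y hy i => by
    have h1 := hub _ (hmem y hy) i
    rw [norm_smul, Real.norm_eq_abs, abs_of_pos hR] at h1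
    rw [hU, abs_mul, abs_of_pos hR]
    refine (mul_le_mul_of_nonneg_left h1 hR.le).trans (le_of_eq ?_)
    field_simp
  have hρ : 1 < R₁ / R := (one_lt_div hR).2 hR₁
  obtain ⟨a, ha1, ha2, haρ⟩ : ∃ a : ℝ, 1 < a ∧ a ≤ 11 / 10 ∧ a < R₁ / R := by
    obtain ⟨a, h1, h2⟩ := exists_between (lt_min (by norm_num : (1 : ℝ) < 11 / 10) hρ)
    exact ⟨a, h1, (h2.trans_le (min_le_left _ _)).le, h2.trans_le (min_le_right _ _)⟩
  obtain ⟨b, hb1, hba⟩ := exists_between ha1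
  have hαβ : b < a ^ 2 := by nlinarith
  set χ : E3 → ℝ := radialCut b (a ^ 2) with hχ
  have hχ1 : ∀ x, a < ‖x‖ → χ x = 1 := fun x hx => radialCut_eq_one hαβ (by nlinarith)
  have hsub : {x : E3 | a < ‖x‖} ⊆ {x | 1 < ‖x‖} := fun x hx => ha1.trans hx
  have hχflux : radialFlux (fun i x => χ x * U i x) (R₁ / R) = 0 := by
    have h0 : 0 < R₁ := hR.trans hR₁
    rw [radialFlux_eq_sphInt (by positivity)]
    rw [sphInt] at hflux ⊢
    have h1 := (mul_eq_zero.1 hflux).resolve_left (by positivity)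
    have h2 : ∀ ξ : sphere (0 : E3) 1, ∑ j, χ ((R₁ / R) • (ξ : E3)) * U j ((R₁ / R) • (ξ : E3))
          * (((R₁ / R) • (ξ : E3)) j / ‖(R₁ / R) • (ξ : E3)‖)
        = R * ∑ j, u j (R₁ • (ξ : E3)) * ((R₁ • (ξ : E3)) j / ‖R₁ • (ξ : E3)‖) := fun ξ => by
      have hξ : ‖(ξ : E3)‖ = 1 := norm_eq_of_mem_sphere ξ
      have hn : ∀ r : ℝ, 0 < r → ‖r • (ξ : E3)‖ = r := fun r hr => by
        rw [norm_smul, Real.norm_eq_abs, abs_of_pos hr, hξ, mul_one]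
      rw [hχ1 _ (by rwa [hn _ (by positivity)]), hn _ (by positivity), hn _ h0, Finset.mul_sum]
      refine Finset.sum_congr rfl fun j _ => ?_
      simp only [hU, smul_smul, mul_div_cancel₀ _ hR.ne', PiLp.smul_apply, smul_eq_mul]
      field_simp
    simp only [h2]
    rw [integral_const_mul, h1, mul_zero, mul_zero]
  have hχU : ∀ x, a < ‖x‖ → ∀ i, χ x * U i x = U i x := fun x hx i => by rw [hχ1 x hx, one_mul]
  obtain ⟨v, q, p₀, hv, hq, hvq, hdiv, hdv, hdq⟩ := hc (fun i x => χ x * U i x)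
    (fun x => χ x * P x) (fun i => contDiff_radialCut_mul hαβ hb1 (hUs i))
    (contDiff_radialCut_mul hαβ hb1 hPs) a (R₁ / R) C (by linarith) ha2 haρ hC hCM
    ((hUns.mono hsub).congr_on (isOpen_lt_norm a) (fun i x hx => hχU x hx i)
      fun x hx => by rw [hχ1 x hx, one_mul])
    (fun x hx i => by
      rw [hχU x hx]
      exact hUb x (hsub hx) i) hχflux
  refine ⟨fun i x => R⁻¹ * v i (R⁻¹ • x), fun x => R⁻¹ ^ 2 * q (R⁻¹ • x), R⁻¹ ^ 2 * p₀,
    fun i => contDiff_const.mul ((hv i).comp (contDiff_const_smul _)),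
    contDiff_const.mul (hq.comp (contDiff_const_smul _)), fun x hx => ?_, fun x => ?_,
    fun i => ?_, hdq.scale hR hq⟩
  · have hx3 : 3 ≤ ‖R⁻¹ • x‖ := by
      rw [norm_smul, norm_inv, Real.norm_eq_abs, abs_of_pos hR, ← div_eq_inv_mul, le_div_iff₀ hR]
      exact hx
    have hxa : a < ‖R⁻¹ • x‖ := by linarith
    obtain ⟨h1, h2⟩ := hvq _ hx3
    have hxx : R • R⁻¹ • x = x := smul_inv_smul₀ hR.ne' x
    refine ⟨fun i => ?_, ?_⟩
    · beta_reduce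
      rw [h1, hχU _ hxa]
      simp only [hU, hxx]
      field_simp
    · beta_reduce
      rw [h2, hχ1 _ hxa]
      simp only [hP, hxx]
      field_simp
  · simp only [pd_const_mul_comp_smul, ← Finset.mul_sum, hdiv, mul_zero]
  · simpa using (hdv i).scale hR (hv i)

end GeneralRadius

end

theorem controlled_divergence_free_extension (M : ℝ) (hM : 0 < M) :
    ∃ c : ℕ → ℝ, ∀ R₀ : ℝ, 0 < R₀ → ∀ (u : E3 → E3) (p : E3 → ℝ) (Cstar : ℝ),
      ContDiffOn ℝ (⊤ : ℕ∞) u (closedBall (0 : E3) R₀)ᶜ →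
      ContDiffOn ℝ (⊤ : ℕ∞) p (closedBall (0 : E3) R₀)ᶜ →
      IsNS (closedBall (0 : E3) R₀)ᶜ u p →
      (∀ x ∈ (closedBall (0 : E3) R₀)ᶜ, ‖u x‖ ≤ Cstar / (R₀ + ‖x‖)) →
      Cstar ≤ M →
      (∃ R₁ : ℝ, R₀ < R₁ ∧ sphInt R₁ (fun x => ∑ j, u x j * (x j / ‖x‖)) = 0) →
      ∃ (ut : E3 → E3) (pt : E3 → ℝ) (p₀ : ℝ),
        ContDiff ℝ (⊤ : ℕ∞) ut ∧ ContDiff ℝ (⊤ : ℕ∞) pt ∧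
        (∀ x : E3, 3 * R₀ ≤ ‖x‖ → ut x = u x ∧ pt x = p x - p₀) ∧
        (∀ x : E3, (∑ j, pd (fun y => ut y j) j x) = 0) ∧
        (∀ (k : ℕ) (x : E3),
          ‖iteratedFDeriv ℝ k ut x‖ ≤ c k * Cstar / (R₀ + ‖x‖) ^ (k + 1)) ∧
        (∀ (k : ℕ) (x : E3),
          ‖iteratedFDeriv ℝ k pt x‖ ≤ c k * Cstar / (R₀ + ‖x‖) ^ (k + 2)) ∧
        ∀ f : E3 → E3,
          (∀ (x : E3) (i : Fin 3),
            f x i = -(∑ j, pd2 (fun y => ut y i) j x)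
              + (∑ j, ut x j * pd (fun y => ut y i) j x) + pd pt i x) →
          Function.support f ⊆ closedBall (0 : E3) (3 * R₀) ∧
          (∀ (k : ℕ) (x : E3),
            ‖iteratedFDeriv ℝ k f x‖ ≤ c k * Cstar / (R₀ + ‖x‖) ^ (k + 3)) := by
  obtain ⟨c, hc0, hc⟩ := exists_extension hM.le
  set d : ℕ → ℝ := fun k =>
    3 * c (k + 2) + M * (3 * leibnizConst c (fun k => c (k + 1)) k) + c (k + 1) with hd
  have hd0 : ∀ k, 0 ≤ d k := fun k => by
    have h1 := hc0 (k + 1)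
    have h2 := hc0 (k + 2)
    have h3 := leibnizConst_nonneg hc0 (fun k => hc0 (k + 1)) k
    positivity
  refine ⟨fun k => 3 * (c k + d k), fun R₀ hR₀ u p C hu hp hns hub hCM hflux => ?_⟩
  obtain ⟨R₁, hR₁, hflux⟩ := hflux
  have hset : (closedBall (0 : E3) R₀)ᶜ = {x | R₀ < ‖x‖} := by
    ext x
    simp
  rw [hset] at hu hp hns hub
  have hC : 0 ≤ C := by
    have hx : ‖(2 * R₀) • ee 0‖ = 2 * R₀ := by
      rw [norm_smul, norm_ee, Real.norm_eq_abs, abs_of_pos (by positivity), mul_one]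
    have h1 := (norm_nonneg _).trans (hub ((2 * R₀) • ee 0)
      (show R₀ < ‖(2 * R₀) • ee 0‖ by linarith))
    have h2 := mul_nonneg h1 (by positivity : 0 ≤ R₀ + ‖(2 * R₀) • ee 0‖)
    rwa [div_mul_cancel₀ _ (by positivity)] at h2
  obtain ⟨v, q, p₀, hv, hq, hvq, hdiv, hdv, hdq⟩ := hc (fun i x => u x i) p R₀ C R₁ hR₀
    (fun i => (contDiff_coord i).comp_contDiffOn hu) hp hC hCM hns.nsOn
    (fun x hx i => (PiLp.norm_apply_le (u x) i).trans (hub x hx)) hR₁ hflux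
  have hconst : ∀ {e : ℕ → ℝ} {m : ℕ} {g : E3 → E3}, (∀ k, e k ≤ c k + d k) →
      (∀ i, ContDiff ℝ (⊤ : ℕ∞) fun x => g x i) → (∀ i, Dec Set.univ R₀ C e m fun x => g x i) →
      ∀ (k : ℕ) (x : E3),
        ‖iteratedFDeriv ℝ k g x‖ ≤ 3 * (c k + d k) * C / (R₀ + ‖x‖) ^ (k + m) := by
    intro e m g he hg h k x
    refine (norm_iteratedFDeriv_le_of_dec hg h k x).trans ?_
    have := he k
    gcongr
  refine ⟨fun x => WithLp.toLp 2 fun i => v i x, q, p₀, ?_, hq, fun x hx => ⟨?_, (hvq x hx).2⟩,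
    hdiv, hconst (fun k => le_add_of_nonneg_right (hd0 k)) hv hdv, fun k x => ?_, fun f hf => ?_⟩
  · exact contDiff_piLp' _ hv
  · ext i
    exact (hvq x hx).1 i
  · refine (hdq k x trivial).trans ?_
    have := hc0 k
    have := hd0 k
    gcongr
    linarith
  · have hf' : ∀ i, (fun x => f x i) = nsForce v q i := fun i => funext fun x => hf x i
    refine ⟨fun x hx => ?_, hconst (e := d) (fun k => le_add_of_nonneg_left (hc0 k))
      (fun i => ?_) fun i => ?_⟩
    · by_contra hx'
      have hx3 : 3 * R₀ < ‖x‖ := by simpa using hx'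
      refine hx (PiLp.ext fun i => ?_)
      refine (hf x i).trans (nsForce_eq_zero (isOpen_lt_norm (3 * R₀)) (hns.nsOn.mono ?_)
        (fun i x hx => (hvq x (le_of_lt hx)).1 i) (fun x hx => (hvq x (le_of_lt hx)).2) hx3 i)
      exact fun y hy => lt_trans (by linarith : R₀ < 3 * R₀) hy
    · rw [hf']
      exact contDiff_nsForce hv hq i
    · rw [hf']
      exact Dec.nsForce hR₀ hC hCM hc0 hv hq hdv hdq i
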